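/- arXiv:2603.12767 — 8 statements merged into one kernel-verified Lean document; each statement's English description precedes it below -/
import Mathlib

section
/- Let X be a real random variable with a log-concave density, i.e. a density of the form φ(x) = e^{-V(x)} on ℝ with V : ℝ → ℝ convex, and assume E[X²] < ∞. Then the function f_X(t) = E[X·1_{X≤t}]²/P(X ≤ t) + E[X·1_{X>t}]²/P(X > t) has a unique maximizer on the set of t with 0 < P(X ≤ t) < 1. -/
/-!
Let `D(t) = E[t - X | X ≤ t]` and `R(t) = E[X - t | X > t]`. The derivative of `f_X` is
`φ(t) (R(t)² - D(t)²)`, so everything reduces to the sign of `R - D`. The distribution function `F`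
inherits from `φ` the inequality `φ(t) F(x) ≤ φ(x) F(t)` for `x ≤ t`; integrating it in `x` shows
that `D = (∫ F) / F` is nondecreasing, and by reflection `R` is nonincreasing. On an interval where
`D` is constant `φ` is proportional to `F`, hence increasing, while where `R` is constant `φ` is
decreasing; so `R - D` is strictly decreasing. It runs from `+∞` to `-∞`, and its zero is the
maximizer.
-/

open MeasureTheory Real Set

/-- The two-step objective `f_X(t) = E[X·1_{X≤t}]²/P(X≤t) + E[X·1_{X>t}]²/P(X>t)`. -/
noncomputable def twoStepObjective {Ω : Type*} [MeasurableSpace Ω]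
    (P : Measure Ω) (X : Ω → ℝ) (t : ℝ) : ℝ :=
  (∫ ω in {ω | X ω ≤ t}, X ω ∂P) ^ 2 / (P {ω | X ω ≤ t}).toReal
    + (∫ ω in {ω | t < X ω}, X ω ∂P) ^ 2 / (P {ω | t < X ω}).toReal

open Filter Topology

theorem add_le_add_of_concaveOn {𝕜 E β : Type*} [Semiring 𝕜] [PartialOrder 𝕜]
    [AddCommGroup E] [Module 𝕜 E] [AddCommMonoid β] [PartialOrder β] [IsOrderedAddMonoid β]
    [Module 𝕜 β] {s : Set E} {f : E → β} (hf : ConcaveOn 𝕜 s f) {x y z : E} (hx : x ∈ s)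
    (hy : y ∈ s) (hz : z ∈ segment 𝕜 x y) : f x + f y ≤ f z + f (x + y - z) := by
  obtain ⟨a, b, ha, hb, hab, rfl⟩ := hz
  have hba : b + a = 1 := by rw [add_comm, hab]
  have reflect : x + y - (a • x + b • y) = b • x + a • y := by
    rw [sub_eq_iff_eq_add, add_add_add_comm, ← add_smul, ← add_smul, hba, hab, one_smul, one_smul]
  calc f x + f y = (a + b) • f x + (b + a) • f y := by rw [hab, hba, one_smul, one_smul]
    _ = (a • f x + b • f y) + (b • f x + a • f y) := by
      rw [add_smul, add_smul, add_add_add_comm]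
    _ ≤ f (a • x + b • y) + f (b • x + a • y) :=
      add_le_add (hf.2 hx hy ha hb hab) (hf.2 hx hy hb ha hba)
    _ = _ := by rw [reflect]

theorem hasDerivAt_setIntegral_Iic {E : Type*} [NormedAddCommGroup E] [NormedSpace ℝ E]
    [CompleteSpace E] {f : ℝ → E} (hf : Continuous f) (hfi : Integrable f) (t : ℝ) :
    HasDerivAt (fun t ↦ ∫ x in Iic t, f x) (f t) t := by
  have split : (fun t ↦ ∫ x in Iic t, f x) =
      fun t ↦ (∫ x in Iic 0, f x) + ∫ x in (0 : ℝ)..t, f x := by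
    funext t
    rw [← intervalIntegral.integral_Iic_sub_Iic hfi.integrableOn hfi.integrableOn,
      add_sub_cancel]
  rw [split]
  exact (hf.integral_hasStrictDerivAt 0 t).hasDerivAt.const_add _

theorem setIntegral_Iic_comp_add_right {E : Type*} [NormedAddCommGroup E] [NormedSpace ℝ E]
    (f : ℝ → E) (a c : ℝ) : ∫ x in Iic a, f (x + c) = ∫ x in Iic (a + c), f x := by
  rw [← (measurePreserving_add_right volume c).setIntegral_preimage_emb
    (measurableEmbedding_addRight c) f (Iic (a + c)), preimage_add_const_Iic, add_sub_cancel_right]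

theorem lt_of_strictMono_of_tendsto_atBot {α β : Type*} [LinearOrder α] [NoMinOrder α]
    [TopologicalSpace β] [Preorder β] [OrderClosedTopology β] {f : α → β} {b : β}
    (hf : StrictMono f) (hlim : Tendsto f atBot (𝓝 b)) (t : α) : b < f t :=
  let ⟨u, hu⟩ := exists_lt t
  (hf.monotone.le_of_tendsto hlim u).trans_lt (hf hu)

theorem nonneg_of_hasDerivAt_nonneg_of_tendsto_atBot {f f' : ℝ → ℝ} {t : ℝ}
    (hf : ∀ x ≤ t, HasDerivAt f (f' x) x) (hf' : ∀ x ≤ t, 0 ≤ f' x)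
    (hlim : Tendsto f atBot (𝓝 0)) : 0 ≤ f t := by
  have le_of_mem_interior (x : ℝ) (hx : x ∈ interior (Iic t)) : x ≤ t :=
    mem_Iic.1 (interior_subset hx)
  have mono : MonotoneOn f (Iic t) := monotoneOn_of_hasDerivWithinAt_nonneg (convex_Iic t)
    (fun x hx ↦ (hf x hx).continuousAt.continuousWithinAt)
    (fun x hx ↦ (hf x (le_of_mem_interior x hx)).hasDerivWithinAt)
    (fun x hx ↦ hf' x (le_of_mem_interior x hx))
  refine le_of_tendsto hlim ?_
  filter_upwards [eventually_le_atBot t] with x hx using mono hx self_mem_Iic hx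

theorem lt_of_hasDerivAt_pos_of_hasDerivAt_neg {f f' : ℝ → ℝ} {c : ℝ}
    (hf : ∀ x, HasDerivAt f (f' x) x) (hpos : ∀ x < c, 0 < f' x) (hneg : ∀ x > c, f' x < 0)
    {x : ℝ} (hx : x ≠ c) : f x < f c := by
  have hcont : Continuous f := continuous_iff_continuousAt.2 fun x ↦ (hf x).continuousAt
  rcases hx.lt_or_gt with hx | hx
  · refine strictMonoOn_of_hasDerivWithinAt_pos (convex_Iic c) hcont.continuousOn
      (fun y _ ↦ (hf y).hasDerivWithinAt) (fun y hy ↦ hpos y ?_) hx.le self_mem_Iic hx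
    rwa [interior_Iic] at hy
  · refine strictAntiOn_of_hasDerivWithinAt_neg (convex_Ici c) hcont.continuousOn
      (fun y _ ↦ (hf y).hasDerivWithinAt) (fun y hy ↦ hneg y ?_) self_mem_Ici hx.le hx
    rwa [interior_Ici] at hy

/-- A positive log-concave function on `ℝ` with finite mass and finite first moment: a log-concave
density, not necessarily normalized. -/
structure IsLogConcaveWeight (φ : ℝ → ℝ) : Prop where
  pos : ∀ x, 0 < φ x
  concaveOn_log : ConcaveOn ℝ univ fun x ↦ log (φ x)
  integrable : Integrable φ
  integrable_id_mul : Integrable fun x ↦ x * φ x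

/-- The unnormalized distribution function `F` of the density `φ`. -/
noncomputable def leftMass (φ : ℝ → ℝ) (t : ℝ) : ℝ := ∫ x in Iic t, φ x

/-- The unnormalized truncated mean `E[X·1_{X≤t}]` of the density `φ`. -/
noncomputable def leftMoment (φ : ℝ → ℝ) (t : ℝ) : ℝ := ∫ x in Iic t, x * φ x

/-- The unnormalized lower partial moment `E[(t - X)⁺]` of the density `φ`. It is the
antiderivative of `leftMass φ` that vanishes at `-∞`. -/
noncomputable def leftExcess (φ : ℝ → ℝ) (t : ℝ) : ℝ := ∫ x in Iic t, (t - x) * φ x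

/-- The mean inactivity time `E[t - X | X ≤ t]` of the density `φ`. -/
noncomputable def meanInactivity (φ : ℝ → ℝ) (t : ℝ) : ℝ := leftExcess φ t / leftMass φ t

/-- The mean residual life `E[X - t | X > t]` of the density `φ`, expressed as the mean inactivity
time of the reflected density so that the two share their theory. -/
noncomputable def meanResidual (φ : ℝ → ℝ) (t : ℝ) : ℝ := meanInactivity (fun x ↦ φ (-x)) (-t)

/-- The contribution `E[X·1_{X≤t}]² / P(X≤t)` of the left half-line to the two-step objective. -/
noncomputable def leftTerm (φ : ℝ → ℝ) (t : ℝ) : ℝ := leftMoment φ t ^ 2 / leftMass φ t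

/-- The two-step objective of the density `φ`, the contribution of the right half-line being
expressed through the reflected density. -/
noncomputable def densityObjective (φ : ℝ → ℝ) (t : ℝ) : ℝ :=
  leftTerm φ t + leftTerm (fun x ↦ φ (-x)) (-t)

theorem tendsto_leftMass_atBot (φ : ℝ → ℝ) : Tendsto (leftMass φ) atBot (𝓝 0) :=
  tendsto_integral_Iic_zero tendsto_id

theorem tendsto_leftMoment_atBot (φ : ℝ → ℝ) : Tendsto (leftMoment φ) atBot (𝓝 0) :=
  tendsto_integral_Iic_zero tendsto_id

theorem densityObjective_eq (φ : ℝ → ℝ) (t : ℝ) :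
    densityObjective φ t = (∫ x in Iic t, x * φ x) ^ 2 / (∫ x in Iic t, φ x) +
      (∫ x in Ioi t, x * φ x) ^ 2 / ∫ x in Ioi t, φ x := by
  have moment_neg : leftMoment (fun x ↦ φ (-x)) (-t) = -∫ x in Ioi t, x * φ x := by
    have flip := integral_comp_neg_Iic (-t) fun x ↦ x * φ x
    simp only [neg_mul, integral_neg, neg_neg] at flip
    rw [← flip, neg_neg, leftMoment]
  rw [densityObjective, leftTerm, leftTerm, moment_neg, neg_sq, leftMoment, leftMass, leftMass,
    integral_comp_neg_Iic, neg_neg]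

namespace IsLogConcaveWeight

variable {φ : ℝ → ℝ}

theorem continuous (h : IsLogConcaveWeight φ) : Continuous φ := by
  have hlog : Continuous fun x ↦ log (φ x) :=
    continuousOn_univ.1 (h.concaveOn_log.continuousOn isOpen_univ)
  exact hlog.rexp.congr fun x ↦ exp_log (h.pos x)

theorem comp_neg (h : IsLogConcaveWeight φ) : IsLogConcaveWeight fun x ↦ φ (-x) where
  pos x := h.pos (-x)
  concaveOn_log := h.concaveOn_log.comp_linearMap (-LinearMap.id)
  integrable := h.integrable.comp_neg
  integrable_id_mul := by simpa using h.integrable_id_mul.comp_neg.neg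

theorem mul_le_mul_add_sub (h : IsLogConcaveWeight φ) {z x t : ℝ} (hzx : z ≤ x) (hxt : x ≤ t) :
    φ t * φ z ≤ φ x * φ (z + (t - x)) := by
  have hx : x ∈ segment ℝ z t := segment_eq_Icc (hzx.trans hxt) ▸ ⟨hzx, hxt⟩
  have hlog := add_le_add_of_concaveOn h.concaveOn_log (mem_univ z) (mem_univ t) hx
  rw [← log_mul (h.pos _).ne' (h.pos _).ne', ← log_mul (h.pos _).ne' (h.pos _).ne',
    log_le_log_iff (mul_pos (h.pos _) (h.pos _)) (mul_pos (h.pos _) (h.pos _))] at hlog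
  rwa [mul_comm, ← add_sub_assoc]

theorem mul_leftMass_le (h : IsLogConcaveWeight φ) {x t : ℝ} (hxt : x ≤ t) :
    φ t * leftMass φ x ≤ φ x * leftMass φ t := by
  have shift : leftMass φ t = ∫ z in Iic x, φ (z + (t - x)) := by
    rw [setIntegral_Iic_comp_add_right, add_sub_cancel, leftMass]
  rw [shift, leftMass, ← integral_const_mul, ← integral_const_mul]
  exact setIntegral_mono_on (h.integrable.integrableOn.const_mul _)
    ((h.integrable.comp_add_right (t - x)).integrableOn.const_mul _) measurableSet_Iic
    fun z hz ↦ h.mul_le_mul_add_sub hz hxt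

theorem hasDerivAt_leftMass (h : IsLogConcaveWeight φ) (t : ℝ) :
    HasDerivAt (leftMass φ) (φ t) t :=
  hasDerivAt_setIntegral_Iic h.continuous h.integrable t

theorem hasDerivAt_leftMoment (h : IsLogConcaveWeight φ) (t : ℝ) :
    HasDerivAt (leftMoment φ) (t * φ t) t :=
  hasDerivAt_setIntegral_Iic (continuous_id.mul h.continuous) h.integrable_id_mul t

theorem strictMono_leftMass (h : IsLogConcaveWeight φ) : StrictMono (leftMass φ) :=
  strictMono_of_hasDerivAt_pos h.hasDerivAt_leftMass h.pos

theorem leftMass_pos (h : IsLogConcaveWeight φ) (t : ℝ) : 0 < leftMass φ t :=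
  lt_of_strictMono_of_tendsto_atBot h.strictMono_leftMass (tendsto_leftMass_atBot φ) t

theorem leftExcess_eq (h : IsLogConcaveWeight φ) (t : ℝ) :
    leftExcess φ t = t * leftMass φ t - leftMoment φ t := by
  simp only [leftExcess, sub_mul]
  rw [integral_sub (h.integrable.integrableOn.const_mul t) h.integrable_id_mul.integrableOn,
    integral_const_mul, leftMass, leftMoment]

theorem hasDerivAt_leftExcess (h : IsLogConcaveWeight φ) (t : ℝ) :
    HasDerivAt (leftExcess φ) (leftMass φ t) t := by
  rw [funext h.leftExcess_eq]
  refine (((hasDerivAt_id t).mul (h.hasDerivAt_leftMass t)).sub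
    (h.hasDerivAt_leftMoment t)).congr_deriv ?_
  simp only [id]
  ring

theorem tendsto_leftExcess_atBot (h : IsLogConcaveWeight φ) :
    Tendsto (leftExcess φ) atBot (𝓝 0) := by
  have moment_lim : Tendsto (fun t ↦ -leftMoment φ t) atBot (𝓝 0) := by
    simpa only [neg_zero] using (tendsto_leftMoment_atBot φ).neg
  refine tendsto_of_tendsto_of_tendsto_of_le_of_le' tendsto_const_nhds moment_lim
    (Eventually.of_forall fun t ↦ ?_) ?_
  · exact setIntegral_nonneg measurableSet_Iic fun x hx ↦
      mul_nonneg (sub_nonneg.2 hx) (h.pos x).le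
  · filter_upwards [eventually_le_atBot 0] with t ht
    rw [h.leftExcess_eq]
    linarith [mul_nonpos_of_nonpos_of_nonneg ht (h.leftMass_pos t).le]

theorem leftExcess_pos (h : IsLogConcaveWeight φ) (t : ℝ) : 0 < leftExcess φ t :=
  lt_of_strictMono_of_tendsto_atBot
    (strictMono_of_hasDerivAt_pos h.hasDerivAt_leftExcess h.leftMass_pos)
    h.tendsto_leftExcess_atBot t

theorem mul_leftExcess_le (h : IsLogConcaveWeight φ) (t : ℝ) :
    φ t * leftExcess φ t ≤ leftMass φ t * leftMass φ t := by
  have hderiv (x : ℝ) : HasDerivAt (fun x ↦ leftMass φ t * leftMass φ x - φ t * leftExcess φ x)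
      (leftMass φ t * φ x - φ t * leftMass φ x) x :=
    ((h.hasDerivAt_leftMass x).const_mul _).sub ((h.hasDerivAt_leftExcess x).const_mul _)
  have hlim : Tendsto (fun x ↦ leftMass φ t * leftMass φ x - φ t * leftExcess φ x)
      atBot (𝓝 0) := by
    simpa using ((tendsto_leftMass_atBot φ).const_mul (leftMass φ t)).sub
      (h.tendsto_leftExcess_atBot.const_mul (φ t))
  have deriv_nonneg (x : ℝ) (hx : x ≤ t) : 0 ≤ leftMass φ t * φ x - φ t * leftMass φ x :=
    sub_nonneg.2 ((h.mul_leftMass_le hx).trans_eq (mul_comm _ _))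
  have diff_nonneg :=
    nonneg_of_hasDerivAt_nonneg_of_tendsto_atBot (fun x _ ↦ hderiv x) deriv_nonneg hlim
  exact sub_nonneg.1 diff_nonneg

theorem meanInactivity_pos (h : IsLogConcaveWeight φ) (t : ℝ) : 0 < meanInactivity φ t :=
  div_pos (h.leftExcess_pos t) (h.leftMass_pos t)

theorem meanInactivity_eq (h : IsLogConcaveWeight φ) (t : ℝ) :
    meanInactivity φ t = t - leftMoment φ t / leftMass φ t := by
  rw [meanInactivity, h.leftExcess_eq, sub_div, mul_div_cancel_right₀ _ (h.leftMass_pos t).ne']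

theorem hasDerivAt_meanInactivity (h : IsLogConcaveWeight φ) (t : ℝ) :
    HasDerivAt (meanInactivity φ)
      ((leftMass φ t * leftMass φ t - leftExcess φ t * φ t) / leftMass φ t ^ 2) t :=
  (h.hasDerivAt_leftExcess t).div (h.hasDerivAt_leftMass t) (h.leftMass_pos t).ne'

theorem continuous_meanInactivity (h : IsLogConcaveWeight φ) : Continuous (meanInactivity φ) :=
  continuous_iff_continuousAt.2 fun t ↦ (h.hasDerivAt_meanInactivity t).continuousAt

theorem monotone_meanInactivity (h : IsLogConcaveWeight φ) : Monotone (meanInactivity φ) := by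
  refine monotone_of_hasDerivAt_nonneg h.hasDerivAt_meanInactivity fun t ↦ ?_
  exact div_nonneg (sub_nonneg.2 ((mul_comm _ _).trans_le (h.mul_leftExcess_le t))) (sq_nonneg _)

theorem tendsto_meanInactivity_atTop (h : IsLogConcaveWeight φ) :
    Tendsto (meanInactivity φ) atTop atTop := by
  have mass_lim : Tendsto (leftMass φ) atTop (𝓝 (∫ x, φ x)) :=
    (aecover_Iic tendsto_id).integral_tendsto_of_countably_generated h.integrable
  have moment_lim : Tendsto (leftMoment φ) atTop (𝓝 (∫ x, x * φ x)) :=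
    (aecover_Iic tendsto_id).integral_tendsto_of_countably_generated h.integrable_id_mul
  have mass_pos : 0 < ∫ x, φ x :=
    (h.leftMass_pos 0).trans_le (h.strictMono_leftMass.monotone.ge_of_tendsto mass_lim 0)
  rw [funext h.meanInactivity_eq]
  exact tendsto_id.atTop_add (moment_lim.div mass_lim mass_pos.ne').neg

theorem strictMonoOn_of_meanInactivity_eq (h : IsLogConcaveWeight φ) {a b : ℝ}
    (hab : meanInactivity φ a = meanInactivity φ b) : StrictMonoOn φ (Ioo a b) := by
  set c := meanInactivity φ a
  have excess_eq : ∀ x ∈ Ioo a b, leftExcess φ x = c * leftMass φ x := fun x hx ↦ by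
    have const : meanInactivity φ x = c :=
      le_antisymm (hab ▸ h.monotone_meanInactivity hx.2.le) (h.monotone_meanInactivity hx.1.le)
    rw [← const, meanInactivity, div_mul_cancel₀ _ (h.leftMass_pos x).ne']
  have mass_eq : ∀ x ∈ Ioo a b, leftMass φ x = c * φ x := fun x hx ↦
    (h.hasDerivAt_leftExcess x).unique <|
      ((h.hasDerivAt_leftMass x).const_mul c).congr_of_eventuallyEq <|
        eventually_of_mem (Ioo_mem_nhds hx.1 hx.2) excess_eq
  intro x hx y hy hxy
  have mass_lt := h.strictMono_leftMass hxy
  rw [mass_eq x hx, mass_eq y hy] at mass_lt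
  exact lt_of_mul_lt_mul_left mass_lt (h.meanInactivity_pos a).le

theorem meanResidual_pos (h : IsLogConcaveWeight φ) (t : ℝ) : 0 < meanResidual φ t :=
  h.comp_neg.meanInactivity_pos (-t)

theorem antitone_meanResidual (h : IsLogConcaveWeight φ) : Antitone (meanResidual φ) :=
  fun _ _ hab ↦ h.comp_neg.monotone_meanInactivity (neg_le_neg hab)

theorem strictAntiOn_of_meanResidual_eq (h : IsLogConcaveWeight φ) {a b : ℝ}
    (hab : meanResidual φ a = meanResidual φ b) : StrictAntiOn φ (Ioo a b) := fun x hx y hy hxy ↦ by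
  have reflected := h.comp_neg.strictMonoOn_of_meanInactivity_eq hab.symm
    ⟨neg_lt_neg hy.2, neg_lt_neg hy.1⟩ ⟨neg_lt_neg hx.2, neg_lt_neg hx.1⟩ (neg_lt_neg hxy)
  simpa only [neg_neg] using reflected

theorem strictAnti_meanResidual_sub_meanInactivity (h : IsLogConcaveWeight φ) :
    StrictAnti fun t ↦ meanResidual φ t - meanInactivity φ t := by
  intro a b hab
  have hR := h.antitone_meanResidual hab.le
  have hD := h.monotone_meanInactivity hab.le
  refine (sub_le_sub hR hD).lt_of_ne fun heq ↦ ?_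
  obtain ⟨x, hax, hxb⟩ := exists_between hab
  obtain ⟨y, hxy, hyb⟩ := exists_between hxb
  have hx : x ∈ Ioo a b := ⟨hax, hxb⟩
  have hy : y ∈ Ioo a b := ⟨hax.trans hxy, hyb⟩
  exact lt_asymm (h.strictMonoOn_of_meanInactivity_eq (by linarith) hx hy hxy)
    (h.strictAntiOn_of_meanResidual_eq (by linarith) hx hy hxy)

theorem exists_meanResidual_eq_meanInactivity (h : IsLogConcaveWeight φ) :
    ∃ t, meanResidual φ t = meanInactivity φ t := by
  have hcont : Continuous fun t ↦ meanResidual φ t - meanInactivity φ t :=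
    (h.comp_neg.continuous_meanInactivity.comp continuous_neg).sub h.continuous_meanInactivity
  have lim_atBot : Tendsto (fun t ↦ meanResidual φ t - meanInactivity φ t) atBot atTop := by
    refine tendsto_atTop_add_right_of_le' _ (-meanInactivity φ 0)
      (h.comp_neg.tendsto_meanInactivity_atTop.comp tendsto_neg_atBot_atTop) ?_
    filter_upwards [eventually_le_atBot 0] with t ht
      using neg_le_neg (h.monotone_meanInactivity ht)
  have lim_atTop : Tendsto (fun t ↦ meanResidual φ t - meanInactivity φ t) atTop atBot := by
    refine tendsto_atBot_add_left_of_ge' _ (meanResidual φ 0) ?_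
      (tendsto_neg_atTop_atBot.comp h.tendsto_meanInactivity_atTop)
    filter_upwards [eventually_ge_atTop 0] with t ht using h.antitone_meanResidual ht
  exact (hcont.surjective' lim_atBot lim_atTop 0).imp fun t ht ↦ sub_eq_zero.1 ht

theorem hasDerivAt_leftTerm (h : IsLogConcaveWeight φ) (t : ℝ) :
    HasDerivAt (leftTerm φ) (φ t * (t ^ 2 - meanInactivity φ t ^ 2)) t := by
  have hF := (h.leftMass_pos t).ne'
  refine (((h.hasDerivAt_leftMoment t).pow 2).div (h.hasDerivAt_leftMass t) hF).congr_deriv ?_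
  rw [h.meanInactivity_eq, Pi.pow_apply]
  field_simp
  ring

theorem hasDerivAt_densityObjective (h : IsLogConcaveWeight φ) (t : ℝ) :
    HasDerivAt (densityObjective φ)
      (φ t * (meanResidual φ t ^ 2 - meanInactivity φ t ^ 2)) t := by
  refine ((h.hasDerivAt_leftTerm t).add
    ((h.comp_neg.hasDerivAt_leftTerm (-t)).comp t (hasDerivAt_neg t))).congr_deriv ?_
  rw [neg_neg, meanResidual]
  ring

theorem exists_forall_densityObjective_lt (h : IsLogConcaveWeight φ) :
    ∃ t, ∀ s ≠ t, densityObjective φ s < densityObjective φ t := by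
  obtain ⟨t, ht⟩ := h.exists_meanResidual_eq_meanInactivity
  have hanti := h.strictAnti_meanResidual_sub_meanInactivity
  refine ⟨t, fun s hs ↦ lt_of_hasDerivAt_pos_of_hasDerivAt_neg h.hasDerivAt_densityObjective
    (fun x hx ↦ mul_pos (h.pos x) (sub_pos.2 ?_))
    (fun x hx ↦ mul_neg_of_pos_of_neg (h.pos x) (sub_neg.2 ?_)) hs⟩
  · exact pow_lt_pow_left₀ (by linarith [hanti hx]) (h.meanInactivity_pos x).le two_ne_zero
  · exact pow_lt_pow_left₀ (by linarith [hanti hx]) (h.meanResidual_pos x).le two_ne_zero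

end IsLogConcaveWeight

section Density

variable {Ω E : Type*} [MeasurableSpace Ω] [MeasurableSpace E] {P : Measure Ω} {X : Ω → E}
  {μ : Measure E} {φ : E → ℝ}

theorem setIntegral_preimage_eq_of_map_eq_withDensity (hX : AEMeasurable X P) (hφ : Measurable φ)
    (hφ0 : ∀ x, 0 ≤ φ x) (hdens : P.map X = μ.withDensity fun x ↦ ENNReal.ofReal (φ x))
    {g : E → ℝ} (hg : AEStronglyMeasurable g (P.map X)) {s : Set E} (hs : MeasurableSet s) :
    ∫ ω in X ⁻¹' s, g (X ω) ∂P = ∫ x in s, g x * φ x ∂μ := by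
  rw [← setIntegral_map hs hg hX, hdens,
    setIntegral_withDensity_eq_setIntegral_toReal_smul hφ.ennreal_ofReal
      (ae_of_all _ fun _ ↦ ENNReal.ofReal_lt_top) g hs]
  simp only [ENNReal.toReal_ofReal (hφ0 _), smul_eq_mul, mul_comm]

theorem integrable_mul_of_map_eq_withDensity (hX : AEMeasurable X P) (hφ : Measurable φ)
    (hφ0 : ∀ x, 0 ≤ φ x) (hdens : P.map X = μ.withDensity fun x ↦ ENNReal.ofReal (φ x))
    {g : E → ℝ} (hg : AEStronglyMeasurable g (P.map X)) (hgX : Integrable (fun ω ↦ g (X ω)) P) :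
    Integrable (fun x ↦ g x * φ x) μ := by
  have hgmap : Integrable g (P.map X) := (integrable_map_measure hg hX).2 hgX
  rw [hdens, integrable_withDensity_iff hφ.ennreal_ofReal
    (ae_of_all _ fun _ ↦ ENNReal.ofReal_lt_top)] at hgmap
  simpa only [ENNReal.toReal_ofReal (hφ0 _)] using hgmap

end Density

section RealRandomVariable

variable {Ω : Type*} [MeasurableSpace Ω] {P : Measure Ω} {X : Ω → ℝ} {φ : ℝ → ℝ}

theorem twoStepObjective_eq_densityObjective (hX : AEMeasurable X P) (hφ : Measurable φ)
    (hφ0 : ∀ x, 0 ≤ φ x) (hdens : P.map X = volume.withDensity fun x ↦ ENNReal.ofReal (φ x)) :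
    twoStepObjective P X = densityObjective φ := by
  have moment (s : Set ℝ) (hs : MeasurableSet s) : ∫ ω in X ⁻¹' s, X ω ∂P = ∫ x in s, x * φ x :=
    setIntegral_preimage_eq_of_map_eq_withDensity hX hφ hφ0 hdens (g := id)
      aestronglyMeasurable_id hs
  have mass (s : Set ℝ) (hs : MeasurableSet s) : (P (X ⁻¹' s)).toReal = ∫ x in s, φ x := by
    simpa [Measure.real] using setIntegral_preimage_eq_of_map_eq_withDensity hX hφ hφ0 hdens
      (g := fun _ ↦ 1) aestronglyMeasurable_const hs
  funext t
  rw [densityObjective_eq, ← moment _ measurableSet_Iic, ← moment _ measurableSet_Ioi,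
    ← mass _ measurableSet_Iic, ← mass _ measurableSet_Ioi]
  rfl

theorem measure_le_mem_Ioo_of_absolutelyContinuous_map [IsProbabilityMeasure P]
    (hX : AEMeasurable X P) (hac : volume ≪ P.map X) (t : ℝ) : P {ω | X ω ≤ t} ∈ Ioo 0 1 := by
  have preimage_ne_zero (s : Set ℝ) (hs : MeasurableSet s) (hvol : volume s ≠ 0) :
      P (X ⁻¹' s) ≠ 0 := by
    rw [← Measure.map_apply_of_aemeasurable hX hs]
    exact mt (fun h ↦ hac h) hvol
  refine ⟨pos_iff_ne_zero.2 (preimage_ne_zero (Iic t) measurableSet_Iic (by simp)),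
    prob_le_one.lt_of_ne fun h ↦ preimage_ne_zero (Ioi t) measurableSet_Ioi (by simp) ?_⟩
  rw [← compl_Iic, preimage_compl]
  exact (prob_compl_eq_zero_iff₀ (hX.nullMeasurable measurableSet_Iic)).2 h

theorem isLogConcaveWeight_exp_neg [IsFiniteMeasure P] (hXi : Integrable X P) {V : ℝ → ℝ}
    (hV : ConvexOn ℝ univ V)
    (hdens : P.map X = volume.withDensity fun x ↦ ENNReal.ofReal (exp (-V x))) :
    IsLogConcaveWeight fun x ↦ exp (-V x) := by
  have hVc : Continuous V := continuousOn_univ.1 (hV.continuousOn isOpen_univ)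
  have hφ : Measurable fun x ↦ exp (-V x) := hVc.neg.rexp.measurable
  exact
    { pos := fun x ↦ exp_pos _
      concaveOn_log := by
        simp only [log_exp]
        exact hV.neg
      integrable := by
        simpa using integrable_mul_of_map_eq_withDensity hXi.aemeasurable hφ
          (fun x ↦ (exp_pos _).le) hdens (g := fun _ ↦ 1) aestronglyMeasurable_const
          (integrable_const _)
      integrable_id_mul := integrable_mul_of_map_eq_withDensity hXi.aemeasurable hφ
        (fun x ↦ (exp_pos _).le) hdens (g := id) aestronglyMeasurable_id hXi }

end RealRandomVariable

/-- if `X` has a log-concave density `e^{-V}` (with `V : ℝ → ℝ` convex) and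
`E[X²] < ∞`, then `f_X` has a unique maximizer on `{t : 0 < P(X ≤ t) < 1}`. -/
theorem unique_maximizer_of_logConcave {Ω : Type*} [MeasurableSpace Ω]
    (P : Measure Ω) [IsProbabilityMeasure P] (X : Ω → ℝ) (hX : Measurable X)
    (V : ℝ → ℝ) (hV : ConvexOn ℝ Set.univ V)
    (hdens : Measure.map X P
      = volume.withDensity (fun x => ENNReal.ofReal (Real.exp (-V x))))
    (hX2 : Integrable (fun ω => (X ω) ^ 2) P) :
    ∃! t : ℝ, (0 < P {ω | X ω ≤ t} ∧ P {ω | X ω ≤ t} < 1) ∧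
      ∀ s : ℝ, 0 < P {ω | X ω ≤ s} → P {ω | X ω ≤ s} < 1 →
        twoStepObjective P X s ≤ twoStepObjective P X t := by
  have hXi : Integrable X P :=
    ((memLp_two_iff_integrable_sq hX.aestronglyMeasurable).2 hX2).integrable one_le_two
  have hφ := isLogConcaveWeight_exp_neg hXi hV hdens
  have hφm := hφ.continuous.measurable
  have hac : volume ≪ P.map X := hdens ▸ withDensity_absolutelyContinuous'
    hφm.ennreal_ofReal.aemeasurable (ae_of_all _ fun x ↦ (ENNReal.ofReal_pos.2 (hφ.pos x)).ne')
  have hmem := measure_le_mem_Ioo_of_absolutelyContinuous_map hX.aemeasurable hac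
  rw [twoStepObjective_eq_densityObjective hX.aemeasurable hφm (fun x ↦ (hφ.pos x).le) hdens]
  obtain ⟨t, ht⟩ := hφ.exists_forall_densityObjective_lt
  refine ⟨t, ⟨hmem t, fun s _ _ ↦ ?_⟩, fun s hs ↦ ?_⟩
  · rcases eq_or_ne s t with rfl | hst
    · exact le_rfl
    · exact (ht s hst).le
  · by_contra hst
    exact (ht s hst).not_ge (hs.2 t (hmem t).1 (hmem t).2)
end

section
/- Let X be a real random variable with a density of the form φ(x) = e^{-V(x)} on ℝ with V : ℝ → ℝ continuous, E[X²] < ∞, and mean μ = E[X]. If μ is a local maximum of the function f_X(t) = E[X·1_{X≤t}]²/P(X ≤ t) + E[X·1_{X>t}]²/P(X > t), then μ is a median of X, i.e. P(X ≤ μ) = 1/2; in other words X is weakly symmetric. -/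
open MeasureTheory Real Set

/-!
Let `a = E[X | X ≤ t]` and `b = E[X | X > t]`. Where the distribution function has derivative `p`,
the truncated mean `E[X·1_{X≤t}]` has derivative `p * t`, whence
`f_X'(t) = p * ((b - t) ^ 2 - (a - t) ^ 2)`: as `a ≤ t < b`, a critical point with `p ≠ 0` is the
midpoint of the two conditional means. The mean is also their barycentre with weights `P(X ≤ t)`
and `P(X > t)`, so if it is critical then these weights are equal.
-/

open scoped Topology

lemma hasDerivAt_sq_div_of_deriv_eq_mul {𝕜 : Type*} [NontriviallyNormedField 𝕜]
    {M F : 𝕜 → 𝕜} {p t : 𝕜} (hM : HasDerivAt M (p * t) t) (hF : HasDerivAt F p t)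
    (hFt : F t ≠ 0) :
    HasDerivAt (fun s ↦ M s ^ 2 / F s) (p * (t ^ 2 - (M t / F t - t) ^ 2)) t := by
  refine ((hM.fun_pow 2).fun_div hF hFt).congr_deriv ?_
  field_simp
  ring

lemma eq_half_of_add_eq_one_of_sq_sub_eq {K : Type*} [Field K] [NeZero (2 : K)]
    {w v a b m : K} (hwv : w + v = 1) (hm : w * a + v * b = m) (hb : b ≠ m)
    (hsq : (b - m) ^ 2 = (a - m) ^ 2) : w = 1 / 2 := by
  have weights_balance : w * (a - m) + v * (b - m) = 0 := by
    linear_combination hm - m * hwv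
  have hb' : b - m ≠ 0 := sub_ne_zero.2 hb
  rcases sq_eq_sq_iff_eq_or_eq_neg.1 hsq with same_side | opposite
  · exact absurd (by linear_combination weights_balance + w * same_side - (b - m) * hwv) hb'
  · have : w = v := mul_right_cancel₀ hb' (by linear_combination w * opposite - weights_balance)
    exact eq_div_of_mul_eq two_ne_zero (by linear_combination hwv + this)

lemma measureReal_mul_setAverage_add_compl {α : Type*} [MeasurableSpace α] {ν : Measure α}
    [IsFiniteMeasure ν] {s : Set α} (hs : MeasurableSet s) {g : α → ℝ} (hg : Integrable g ν) :
    ν.real s * (⨍ x in s, g x ∂ν) + ν.real sᶜ * (⨍ x in sᶜ, g x ∂ν) = ∫ x, g x ∂ν := by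
  rw [← integral_add_compl hs hg, ← measure_smul_setAverage g (measure_ne_top ν s),
    ← measure_smul_setAverage g (measure_ne_top ν sᶜ), smul_eq_mul, smul_eq_mul]

section Law

variable {ν : Measure ℝ} {t p : ℝ}

section TruncatedIntegral

variable [IsFiniteMeasure ν] {E : Type*} [NormedAddCommGroup E] [NormedSpace ℝ E]
  [CompleteSpace E] {g : ℝ → E}

lemma hasDerivAt_setIntegral_Iic_of_measureReal (hg : Integrable g ν) (hgt : ContinuousAt g t)
    (hF : HasDerivAt (fun s ↦ ν.real (Iic s)) p t) :
    HasDerivAt (fun s ↦ ∫ x in Iic s, g x ∂ν) (p • g t) t := by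
  have interval_integral_one (s : ℝ) :
      ∫ _ in t..s, (1 : ℝ) ∂ν = ν.real (Iic s) - ν.real (Iic t) := by
    simp [← intervalIntegral.integral_Iic_sub_Iic (integrable_const (1 : ℝ)).integrableOn
      (integrable_const (1 : ℝ)).integrableOn]
  have interval_integral_const (s : ℝ) :
      ∫ _ in t..s, g t ∂ν = (ν.real (Iic s) - ν.real (Iic t)) • g t := by
    simp [← intervalIntegral.integral_Iic_sub_Iic (integrable_const (g t)).integrableOn
      (integrable_const (g t)).integrableOn, sub_smul]
  have increment_isLittleO :
      (fun s ↦ (∫ x in t..s, g x ∂ν) - (ν.real (Iic s) - ν.real (Iic t)) • g t)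
        =o[𝓝 t] fun s ↦ ν.real (Iic s) - ν.real (Iic t) := by
    simpa only [interval_integral_one, interval_integral_const, id_eq] using
      intervalIntegral.measure_integral_sub_linear_isLittleO_of_tendsto_ae
        hg.aestronglyMeasurable.stronglyMeasurableAtFilter
        (hgt.tendsto.mono_left inf_le_left) tendsto_const_nhds Filter.tendsto_id
  have error_deriv :
      HasDerivAt (fun s ↦ (∫ x in Iic s, g x ∂ν) - ν.real (Iic s) • g t) 0 t := by
    refine .of_isLittleO ((increment_isLittleO.trans_isBigO hF.isBigO_sub).congr_left fun s ↦ ?_)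
    rw [← intervalIntegral.integral_Iic_sub_Iic hg.integrableOn hg.integrableOn, sub_smul,
      smul_zero]
    abel
  simpa using error_deriv.fun_add (hF.smul_const (g t))

lemma hasDerivAt_setIntegral_Ioi_of_measureReal (hg : Integrable g ν) (hgt : ContinuousAt g t)
    (hF : HasDerivAt (fun s ↦ ν.real (Iic s)) p t) :
    HasDerivAt (fun s ↦ ∫ x in Ioi s, g x ∂ν) (-p • g t) t := by
  simp_rw [← compl_Iic, setIntegral_compl measurableSet_Iic hg, neg_smul]
  exact (hasDerivAt_setIntegral_Iic_of_measureReal hg hgt hF).const_sub _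

end TruncatedIntegral

lemma hasDerivAt_twoStepObjective_id [IsFiniteMeasure ν] (hν : Integrable id ν)
    (hF : HasDerivAt (fun s ↦ ν.real (Iic s)) p t)
    (hIic : ν.real (Iic t) ≠ 0) (hIoi : ν.real (Ioi t) ≠ 0) :
    HasDerivAt (twoStepObjective ν id)
      (p * (((⨍ x in Ioi t, x ∂ν) - t) ^ 2 - ((⨍ x in Iic t, x ∂ν) - t) ^ 2)) t := by
  have hG : HasDerivAt (fun s ↦ ν.real (Ioi s)) (-p) t := by
    simp_rw [← compl_Iic, measureReal_compl measurableSet_Iic]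
    exact hF.const_sub _
  have lower := hasDerivAt_sq_div_of_deriv_eq_mul
    (hasDerivAt_setIntegral_Iic_of_measureReal hν continuousAt_id hF) hF hIic
  have upper := hasDerivAt_sq_div_of_deriv_eq_mul
    (hasDerivAt_setIntegral_Ioi_of_measureReal hν continuousAt_id hF) hG hIoi
  refine (lower.fun_add upper).congr_deriv ?_
  simp only [setAverage_eq, smul_eq_mul, id_eq]
  ring

lemma measureReal_Iic_ne_zero_of_deriv_ne_zero (h : deriv (fun s ↦ ν.real (Iic s)) t ≠ 0) :
    ν.real (Iic t) ≠ 0 := by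
  contrapose! h
  have isLocalMin : IsLocalMin (fun s ↦ ν.real (Iic s)) t :=
    .of_forall fun s ↦ h.trans_le measureReal_nonneg
  exact isLocalMin.deriv_eq_zero

lemma measureReal_Ioi_ne_zero_of_deriv_ne_zero [IsFiniteMeasure ν]
    (h : deriv (fun s ↦ ν.real (Iic s)) t ≠ 0) :
    ν.real (Ioi t) ≠ 0 := by
  contrapose! h
  have isLocalMax : IsLocalMax (fun s ↦ ν.real (Iic s)) t := .of_forall fun s ↦ by
    have := measureReal_add_measureReal_compl (μ := ν) (measurableSet_Iic (a := t))
    rw [compl_Iic, h, add_zero] at this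
    exact (measureReal_mono (subset_univ _)).trans_eq this.symm
  exact isLocalMax.deriv_eq_zero

lemma lt_setAverage_Ioi (hν : IntegrableOn id (Ioi t) ν) (hIoi : ν.real (Ioi t) ≠ 0) :
    t < ⨍ x in Ioi t, x ∂ν := by
  obtain ⟨hne_zero, hne_top⟩ := ENNReal.toReal_ne_zero.1 hIoi
  obtain ⟨x, hx, hle⟩ := exists_le_setAverage hne_zero hne_top hν
  exact lt_of_lt_of_le hx hle

lemma hasDerivAt_measureReal_Iic_withDensity {φ : ℝ → ℝ} (hφ : AEStronglyMeasurable φ)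
    (hφ_nonneg : 0 ≤ᵐ[volume] φ) (hφt : ContinuousAt φ t)
    [IsFiniteMeasure (volume.withDensity fun x ↦ ENNReal.ofReal (φ x))] :
    HasDerivAt (fun s ↦ (volume.withDensity fun x ↦ ENNReal.ofReal (φ x)).real (Iic s))
      (φ t) t := by
  have hφ_int : Integrable φ := by
    rw [← lintegral_ofReal_ne_top_iff_integrable hφ hφ_nonneg, ← setLIntegral_univ,
      ← withDensity_apply _ .univ]
    exact measure_ne_top _ _
  have real_Iic (s : ℝ) : (volume.withDensity fun x ↦ ENNReal.ofReal (φ x)).real (Iic s)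
      = (∫ x in t..s, φ x) + ∫ x in Iic t, φ x := by
    rw [← intervalIntegral.integral_Iic_sub_Iic hφ_int.integrableOn hφ_int.integrableOn,
      sub_add_cancel, measureReal_def, withDensity_apply _ measurableSet_Iic,
      integral_eq_lintegral_of_nonneg_ae (ae_restrict_of_ae hφ_nonneg) hφ.restrict]
  simp_rw [real_Iic]
  exact (intervalIntegral.integral_hasDerivAt_right hφ_int.intervalIntegrable
    hφ.stronglyMeasurableAtFilter hφt).add_const _

end Law

theorem measureReal_Iic_integral_eq_half_of_deriv_twoStepObjective {ν : Measure ℝ}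
    [IsProbabilityMeasure ν] (hν : Integrable id ν) {m : ℝ} (hm : m = ∫ x, x ∂ν)
    (hF : deriv (fun s ↦ ν.real (Iic s)) m ≠ 0) (hcrit : deriv (twoStepObjective ν id) m = 0) :
    ν.real (Iic m) = 1 / 2 := by
  have hIoi := measureReal_Ioi_ne_zero_of_deriv_ne_zero hF
  have hderiv := hasDerivAt_twoStepObjective_id hν
    (differentiableAt_of_deriv_ne_zero hF).hasDerivAt
    (measureReal_Iic_ne_zero_of_deriv_ne_zero hF) hIoi
  have equidistant : ((⨍ x in Ioi m, x ∂ν) - m) ^ 2 = ((⨍ x in Iic m, x ∂ν) - m) ^ 2 :=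
    sub_eq_zero.1 ((mul_eq_zero.1 (hderiv.deriv.symm.trans hcrit)).resolve_left hF)
  have weights : ν.real (Iic m) + ν.real (Ioi m) = 1 := by
    rw [← compl_Iic, probReal_add_probReal_compl measurableSet_Iic]
  have barycentre :
      ν.real (Iic m) * (⨍ x in Iic m, x ∂ν) + ν.real (Ioi m) * (⨍ x in Ioi m, x ∂ν) = m := by
    rw [hm, ← compl_Iic]
    exact measureReal_mul_setAverage_add_compl measurableSet_Iic hν
  exact eq_half_of_add_eq_one_of_sq_sub_eq weights barycentre
    (lt_setAverage_Ioi hν.integrableOn hIoi).ne' equidistant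

section RandomVariable

variable {Ω : Type*} [MeasurableSpace Ω] {P : Measure Ω} {X : Ω → ℝ}

lemma twoStepObjective_map {Ω' : Type*} [MeasurableSpace Ω'] {T : Ω → Ω'} (hT : AEMeasurable T P)
    {Y : Ω' → ℝ} (hY : Measurable Y) :
    twoStepObjective (P.map T) Y = twoStepObjective P (Y ∘ T) := by
  funext t
  have hle : MeasurableSet {y | Y y ≤ t} := hY measurableSet_Iic
  have hlt : MeasurableSet {y | t < Y y} := hY measurableSet_Ioi
  simp only [twoStepObjective, setIntegral_map hle hY.aestronglyMeasurable hT,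
    setIntegral_map hlt hY.aestronglyMeasurable hT, Measure.map_apply_of_aemeasurable hT hle,
    Measure.map_apply_of_aemeasurable hT hlt, preimage_ofPred_eq, Function.comp_apply]

lemma map_measureReal_Iic (hX : AEMeasurable X P) (t : ℝ) :
    (P.map X).real (Iic t) = P.real {ω | X ω ≤ t} :=
  map_measureReal_apply_of_aemeasurable hX measurableSet_Iic

lemma hasDerivAt_measureReal_le_of_map_eq_withDensity [IsFiniteMeasure P] (hX : AEMeasurable X P)
    {φ : ℝ → ℝ} (hdens : P.map X = volume.withDensity fun x ↦ ENNReal.ofReal (φ x))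
    (hφ : AEStronglyMeasurable φ) (hφ_nonneg : 0 ≤ᵐ[volume] φ) {t : ℝ} (hφt : ContinuousAt φ t) :
    HasDerivAt (fun s ↦ P.real {ω | X ω ≤ s}) (φ t) t := by
  have : IsFiniteMeasure (volume.withDensity fun x ↦ ENNReal.ofReal (φ x)) :=
    hdens ▸ inferInstance
  simp_rw [← map_measureReal_Iic hX, hdens]
  exact hasDerivAt_measureReal_Iic_withDensity hφ hφ_nonneg hφt

theorem weaklySymmetric_of_mean_isLocalMax_general [IsProbabilityMeasure P] (hX : Integrable X P)
    {μ : ℝ} (hμ : μ = ∫ ω, X ω ∂P) (hF : deriv (fun t ↦ P.real {ω | X ω ≤ t}) μ ≠ 0)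
    (hcrit : deriv (twoStepObjective P X) μ = 0) :
    P {ω | X ω ≤ μ} = 1 / 2 := by
  have hXm := hX.aemeasurable
  have := Measure.isProbabilityMeasure_map hXm
  have half : (P.map X).real (Iic μ) = 1 / 2 := by
    refine measureReal_Iic_integral_eq_half_of_deriv_twoStepObjective
      ((integrable_map_measure aestronglyMeasurable_id hXm).2 hX)
      (hμ.trans (integral_map hXm aestronglyMeasurable_id).symm) ?_ ?_
    · simpa only [map_measureReal_Iic hXm] using hF
    · rwa [twoStepObjective_map hXm measurable_id]
  rw [map_measureReal_Iic hXm] at half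
  rw [← ofReal_measureReal, half, ENNReal.ofReal_div_of_pos two_pos]
  simp

end RandomVariable

/-- if `X` has density `e^{-V}` with `V` continuous, `E[X²] < ∞`, and the mean
`μ = E[X]` is a local maximum of `f_X`, then `μ` is a median of `X`, i.e. `P(X ≤ μ) = 1/2`. -/
theorem weaklySymmetric_of_mean_isLocalMax {Ω : Type*} [MeasurableSpace Ω]
    (P : Measure Ω) [IsProbabilityMeasure P] (X : Ω → ℝ) (hX : Measurable X)
    (V : ℝ → ℝ) (hV : Continuous V)
    (hdens : Measure.map X P
      = volume.withDensity (fun x => ENNReal.ofReal (Real.exp (-V x))))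
    (hX2 : Integrable (fun ω => (X ω) ^ 2) P)
    (μ : ℝ) (hμ : μ = ∫ ω, X ω ∂P)
    (hmax : IsLocalMax (twoStepObjective P X) μ) :
    P {ω | X ω ≤ μ} = 1 / 2 := by
  have hX1 : Integrable X P :=
    ((memLp_two_iff_integrable_sq hX.aestronglyMeasurable).2 hX2).integrable one_le_two
  have hφ : Continuous fun x ↦ exp (-V x) := by fun_prop
  have hF : HasDerivAt (fun t ↦ P.real {ω | X ω ≤ t}) (exp (-V μ)) μ :=
    hasDerivAt_measureReal_le_of_map_eq_withDensity hX.aemeasurable hdens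
      hφ.aestronglyMeasurable (ae_of_all _ fun x ↦ (exp_pos (-V x)).le) hφ.continuousAt
  exact weaklySymmetric_of_mean_isLocalMax_general hX1 hμ (hF.deriv.trans_ne (exp_ne_zero _))
    hmax.deriv_eq_zero
end

section
/- Let V : [0, ∞) → ℝ be convex with ∫₀^∞ e^{-V(y)} dy < ∞ and ∫₀^∞ y e^{-V(y)} dy < ∞. Then e^{-V(0)} · ∫₀^∞ y e^{-V(y)} dy ≤ (∫₀^∞ e^{-V(y)} dy)². -/
open MeasureTheory Real Set

/-!
Convexity makes `f = exp (-V)` satisfy `f 0 * f (t + s) ≤ f t * f s` for `t, s > 0`. Integrating in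
`s` bounds the tail of `f` beyond `t` by `f 0 * ∫_{(t, ∞)} f ≤ f t * ∫ f`. Integrating in `t` gives
the claim, because `∫ y, y * f y` is the integral of the tails by the layer-cake formula.
-/

open scoped ENNReal

theorem add_le_add_of_convexOn_of_mem_segment {𝕜 E β : Type*} [Semiring 𝕜] [PartialOrder 𝕜]
    [AddCommGroup E] [Module 𝕜 E] [AddCommMonoid β] [PartialOrder β] [IsOrderedAddMonoid β]
    [Module 𝕜 β] {s : Set E} {f : E → β} (hf : ConvexOn 𝕜 s f) {a b x y : E} (ha : a ∈ s)
    (hb : b ∈ s) (hx : x ∈ segment 𝕜 a b) (hxy : x + y = a + b) : f x + f y ≤ f a + f b := by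
  obtain ⟨p, q, hp, hq, hpq, rfl⟩ := hx
  have hqp : q + p = 1 := add_comm p q ▸ hpq
  have hy : y = q • a + p • b := by
    refine add_left_cancel (hxy.trans ?_)
    rw [add_add_add_comm, ← add_smul, ← add_smul, hpq, hqp, one_smul, one_smul]
  calc
    f (p • a + q • b) + f y ≤ (p • f a + q • f b) + (q • f a + p • f b) :=
      add_le_add (hf.2 ha hb hp hq hpq) (hy ▸ hf.2 ha hb hq hp hqp)
    _ = f a + f b := by
      rw [add_add_add_comm, ← add_smul, ← add_smul, hpq, hqp, one_smul, one_smul]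

theorem exp_neg_zero_mul_exp_neg_add_le_of_convexOn {V : ℝ → ℝ} (hV : ConvexOn ℝ (Ici 0) V)
    {x y : ℝ} (hx : 0 ≤ x) (hy : 0 ≤ y) :
    exp (-V 0) * exp (-V (x + y)) ≤ exp (-V x) * exp (-V y) := by
  have hxs : x ∈ segment ℝ 0 (x + y) := by
    rw [segment_eq_Icc (add_nonneg hx hy)]
    exact ⟨hx, le_add_of_nonneg_right hy⟩
  have hVxy : V x + V y ≤ V 0 + V (x + y) :=
    add_le_add_of_convexOn_of_mem_segment hV self_mem_Ici (add_nonneg hx hy) hxs (zero_add _).symm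
  rw [← exp_add, ← exp_add, exp_le_exp]
  linarith

theorem lintegral_ofReal_mul_eq_lintegral_setLIntegral_lt {α : Type*} [MeasurableSpace α]
    {μ : Measure α} {g : α → ℝ} {F : α → ℝ≥0∞} (hg₀ : 0 ≤ᵐ[μ] g) (hg : AEMeasurable g μ)
    (hF : AEMeasurable F μ) :
    ∫⁻ a, .ofReal (g a) * F a ∂μ = ∫⁻ t in Ioi (0 : ℝ), ∫⁻ a in {a | t < g a}, F a ∂μ := by
  have hac : μ.withDensity F ≪ μ := withDensity_absolutelyContinuous μ F
  calc
    ∫⁻ a, .ofReal (g a) * F a ∂μ = ∫⁻ a, .ofReal (g a) ∂μ.withDensity F := by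
      rw [lintegral_withDensity_eq_lintegral_mul₀ hF hg.ennreal_ofReal]
      simp only [Pi.mul_apply, mul_comm]
    _ = ∫⁻ t in Ioi (0 : ℝ), μ.withDensity F {a | t < g a} :=
      lintegral_eq_lintegral_meas_lt _ (hac.ae_le hg₀) (hg.mono_ac hac)
    _ = ∫⁻ t in Ioi (0 : ℝ), ∫⁻ a in {a | t < g a}, F a ∂μ := by
      refine lintegral_congr fun t => withDensity_apply₀ F ?_
      exact nullMeasurableSet_lt aemeasurable_const hg

theorem setLIntegral_Ioi_ofReal_mul_eq_lintegral_tail {μ : Measure ℝ} {F : ℝ → ℝ≥0∞}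
    (hF : AEMeasurable F (μ.restrict (Ioi 0))) :
    ∫⁻ y in Ioi 0, .ofReal y * F y ∂μ = ∫⁻ t in Ioi 0, ∫⁻ s in Ioi t, F s ∂μ := by
  have hpos : ∀ᵐ y ∂μ.restrict (Ioi 0), (0 : ℝ) ≤ y :=
    ae_restrict_of_forall_mem measurableSet_Ioi fun _ hy => le_of_lt hy
  rw [lintegral_ofReal_mul_eq_lintegral_setLIntegral_lt hpos aemeasurable_id' hF]
  refine setLIntegral_congr_fun measurableSet_Ioi fun t ht => ?_
  change ∫⁻ s in Ioi t, F s ∂μ.restrict (Ioi 0) = _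
  rw [Measure.restrict_restrict_of_subset (Ioi_subset_Ioi (le_of_lt ht))]

theorem setLIntegral_Ioi_eq_setLIntegral_Ioi_zero_add {G : Type*} [AddCommGroup G] [LinearOrder G]
    [IsOrderedAddMonoid G] [MeasurableSpace G] [MeasurableAdd G] (μ : Measure G)
    [μ.IsAddLeftInvariant] (F : G → ℝ≥0∞) (t : G) :
    ∫⁻ s in Ioi t, F s ∂μ = ∫⁻ s in Ioi 0, F (t + s) ∂μ := by
  rw [← (measurePreserving_add_left μ t).setLIntegral_comp_preimage_emb
    (measurableEmbedding_addLeft t), preimage_const_add_Ioi, sub_self]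

section Submultiplicative

variable {F : ℝ → ℝ≥0∞} {c : ℝ≥0∞}

theorem mul_setLIntegral_Ioi_le_mul_setLIntegral_Ioi_zero
    (hF : AEMeasurable F (volume.restrict (Ioi 0))) {t : ℝ}
    (hc : ∀ s, 0 < s → c * F (t + s) ≤ F t * F s) :
    c * ∫⁻ s in Ioi t, F s ≤ F t * ∫⁻ s in Ioi 0, F s :=
  calc
    c * ∫⁻ s in Ioi t, F s = c * ∫⁻ s in Ioi 0, F (t + s) := by
      rw [setLIntegral_Ioi_eq_setLIntegral_Ioi_zero_add]
    _ ≤ ∫⁻ s in Ioi 0, c * F (t + s) := lintegral_const_mul_le _ _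
    _ ≤ ∫⁻ s in Ioi 0, F t * F s := setLIntegral_mono' measurableSet_Ioi hc
    _ = F t * ∫⁻ s in Ioi 0, F s := lintegral_const_mul'' _ hF

theorem mul_setLIntegral_Ioi_ofReal_mul_le_sq (hF : AEMeasurable F (volume.restrict (Ioi 0)))
    (hc : ∀ t s, 0 < t → 0 < s → c * F (t + s) ≤ F t * F s) :
    c * ∫⁻ y in Ioi 0, .ofReal y * F y ≤ (∫⁻ y in Ioi 0, F y) ^ 2 :=
  calc
    c * ∫⁻ y in Ioi 0, .ofReal y * F y = c * ∫⁻ t in Ioi 0, ∫⁻ s in Ioi t, F s := by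
      rw [setLIntegral_Ioi_ofReal_mul_eq_lintegral_tail hF]
    _ ≤ ∫⁻ t in Ioi 0, c * ∫⁻ s in Ioi t, F s := lintegral_const_mul_le _ _
    _ ≤ ∫⁻ t in Ioi 0, F t * ∫⁻ s in Ioi 0, F s :=
      setLIntegral_mono' measurableSet_Ioi fun t ht =>
        mul_setLIntegral_Ioi_le_mul_setLIntegral_Ioi_zero hF fun s => hc t s ht
    _ = (∫⁻ y in Ioi 0, F y) ^ 2 := by rw [lintegral_mul_const'' _ hF, sq]

end Submultiplicative

section Real

variable {f : ℝ → ℝ} {c : ℝ}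

theorem ofReal_mul_setLIntegral_Ioi_ofReal_le_sq
    (hfm : AEMeasurable f (volume.restrict (Ioi 0))) (hf : ∀ y, 0 < y → 0 ≤ f y) (hc : 0 ≤ c)
    (hcf : ∀ t s, 0 < t → 0 < s → c * f (t + s) ≤ f t * f s) :
    ENNReal.ofReal c * ∫⁻ y in Ioi 0, .ofReal (y * f y) ≤
      (∫⁻ y in Ioi 0, .ofReal (f y)) ^ 2 := by
  have hmul : ∫⁻ y in Ioi 0, .ofReal (y * f y) = ∫⁻ y in Ioi 0, .ofReal y * .ofReal (f y) :=
    setLIntegral_congr_fun measurableSet_Ioi fun y hy => ENNReal.ofReal_mul (le_of_lt hy)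
  rw [hmul]
  refine mul_setLIntegral_Ioi_ofReal_mul_le_sq hfm.ennreal_ofReal fun t s ht hs => ?_
  rw [← ENNReal.ofReal_mul hc, ← ENNReal.ofReal_mul (hf t ht)]
  exact ENNReal.ofReal_le_ofReal (hcf t s ht hs)

theorem integrableOn_Ioi_id_mul_of_mul_le (hfi : IntegrableOn f (Ioi 0))
    (hf : ∀ y, 0 < y → 0 ≤ f y) (hc : 0 < c)
    (hcf : ∀ t s, 0 < t → 0 < s → c * f (t + s) ≤ f t * f s) :
    IntegrableOn (fun y => y * f y) (Ioi 0) := by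
  have hnonneg : ∀ᵐ y ∂volume.restrict (Ioi 0), 0 ≤ y * f y :=
    ae_restrict_of_forall_mem measurableSet_Ioi fun y hy =>
      mul_nonneg (le_of_lt hy) (hf y hy)
  have hfin : ENNReal.ofReal c * ∫⁻ y in Ioi 0, .ofReal (y * f y) ≠ ∞ :=
    ne_top_of_le_ne_top (ENNReal.pow_ne_top hfi.lintegral_lt_top.ne)
      (ofReal_mul_setLIntegral_Ioi_ofReal_le_sq hfi.aemeasurable hf hc.le hcf)
  refine ⟨aestronglyMeasurable_id.mul hfi.aestronglyMeasurable, ?_⟩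
  rw [hasFiniteIntegral_iff_ofReal hnonneg]
  exact ENNReal.lt_top_of_mul_ne_top_right hfin (ENNReal.ofReal_pos.2 hc).ne'

theorem integral_inequality_of_convex_general (hfi : IntegrableOn f (Ioi 0))
    (hf : ∀ y, 0 < y → 0 ≤ f y) (hc : 0 < c)
    (hcf : ∀ t s, 0 < t → 0 < s → c * f (t + s) ≤ f t * f s) :
    c * ∫ y in Ioi 0, y * f y ≤ (∫ y in Ioi 0, f y) ^ 2 := by
  have hf_ae : ∀ᵐ y ∂volume.restrict (Ioi 0), 0 ≤ f y :=
    ae_restrict_of_forall_mem measurableSet_Ioi hf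
  have hyf_ae : ∀ᵐ y ∂volume.restrict (Ioi 0), 0 ≤ y * f y :=
    ae_restrict_of_forall_mem measurableSet_Ioi fun y hy =>
      mul_nonneg (le_of_lt hy) (hf y hy)
  have hlintegral := ofReal_mul_setLIntegral_Ioi_ofReal_le_sq hfi.aemeasurable hf hc.le hcf
  rwa [← ofReal_integral_eq_lintegral_ofReal
      (integrableOn_Ioi_id_mul_of_mul_le hfi hf hc hcf) hyf_ae,
    ← ofReal_integral_eq_lintegral_ofReal hfi hf_ae, ← ENNReal.ofReal_mul hc.le,
    ← ENNReal.ofReal_pow (integral_nonneg_of_ae hf_ae),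
    ENNReal.ofReal_le_ofReal_iff (sq_nonneg _)] at hlintegral

end Real

/-- if `V` is convex on `[0, ∞)` with `∫₀^∞ e^{-V} < ∞` and `∫₀^∞ y e^{-V(y)} dy < ∞`,
then `e^{-V(0)} ∫₀^∞ y e^{-V(y)} dy ≤ (∫₀^∞ e^{-V(y)} dy)²`. -/
theorem integral_inequality_of_convex (V : ℝ → ℝ) (hV : ConvexOn ℝ (Set.Ici 0) V)
    (h1 : IntegrableOn (fun y => Real.exp (-V y)) (Set.Ioi 0))
    (h2 : IntegrableOn (fun y => y * Real.exp (-V y)) (Set.Ioi 0)) :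
    Real.exp (-V 0) * ∫ y in Set.Ioi (0:ℝ), y * Real.exp (-V y)
      ≤ (∫ y in Set.Ioi (0:ℝ), Real.exp (-V y)) ^ 2 :=
  integral_inequality_of_convex_general h1 (fun _ _ => (exp_pos _).le) (exp_pos _)
    fun _ _ ht hs => exp_neg_zero_mul_exp_neg_add_le_of_convexOn hV ht.le hs.le
end

section
/- Let V : [0, ∞) → ℝ be convex with ∫₀^∞ e^{-V(y)} dy < ∞ and ∫₀^∞ y e^{-V(y)} dy < ∞, and let V'₊ denote the right derivative of V. Then ∫₀^∞ e^{-V(y)} dy = ∫₀^∞ y V'₊(y) e^{-V(y)} dy. -/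
open MeasureTheory Real Set

/-- The right derivative `V'₊(y)` of a function `V : ℝ → ℝ` at `y`. -/
noncomputable def rightDeriv (V : ℝ → ℝ) (y : ℝ) : ℝ :=
  derivWithin V (Set.Ioi y) y

open Filter Topology

/-!
The function `F y = (y - a) * exp (-V y)` has right derivative
`exp (-V y) - (y - a) * V'₊ y * exp (-V y)`. Since `exp (-V)` is integrable, `V` has a tangent line
of positive slope, so `exp (-V)` decays exponentially, `F` vanishes at both ends of `(a, ∞)`, and
the integral of the right derivative is `0`.

The point is that this right derivative is integrable. Replace the weight `y - a` by `y - c`, where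
`V'₊ c ≥ 0`. As `V'₊` is monotone, `(y - c) * V'₊ y ≥ (y - c) * V'₊ c`, so the right derivative of
`(y - c) * exp (-V y)` is at most a multiple of `exp (-V y)`, while the function itself is negative
near `a` and positive near `∞`; this one-sided control forces integrability. The weights for two
such `c` combine to any weight `y - p`, in particular to `y - a`.
-/

section ImproperIntegral

variable {a : ℝ}

lemma intervalIntegral_eq_sub_of_hasDerivWithinAt_Ioi {E : Type*} [NormedAddCommGroup E]
    [NormedSpace ℝ E] [CompleteSpace E] {f f' : ℝ → E} {x y : ℝ} (hcont : ContinuousOn f (Ioi a))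
    (hderiv : ∀ t ∈ Ioi a, HasDerivWithinAt f (f' t) (Ioi t) t)
    (hloc : LocallyIntegrableOn f' (Ioi a)) (hx : a < x) (hxy : x ≤ y) :
    ∫ t in x..y, f' t = f y - f x := by
  have hsub : Icc x y ⊆ Ioi a := fun t ht => hx.trans_le ht.1
  exact intervalIntegral.integral_eq_sub_of_hasDeriv_right_of_le hxy (hcont.mono hsub)
    (fun t ht => hderiv t (hx.trans ht.1))
    ((intervalIntegrable_iff_integrableOn_Icc_of_le hxy).2
      (hloc.integrableOn_compact_subset hsub isCompact_Icc))

lemma integral_Ioi_of_hasDerivWithinAt_of_tendsto {E : Type*} [NormedAddCommGroup E]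
    [NormedSpace ℝ E] [CompleteSpace E] {f f' : ℝ → E} {l m : E} (hcont : ContinuousOn f (Ioi a))
    (hderiv : ∀ x ∈ Ioi a, HasDerivWithinAt f (f' x) (Ioi x) x) (hint : IntegrableOn f' (Ioi a))
    (hl : Tendsto f (𝓝[>] a) (𝓝 l)) (hm : Tendsto f atTop (𝓝 m)) :
    ∫ x in Ioi a, f' x = m - l := by
  have integral_Ioi_of_lt (x : ℝ) (hx : a < x) : ∫ t in Ioi x, f' t = m - f x := by
    refine tendsto_nhds_unique (intervalIntegral_tendsto_integral_Ioi x
      (hint.mono_set (Ioi_subset_Ioi hx.le)) tendsto_id) ((hm.sub_const (f x)).congr' ?_)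
    filter_upwards [eventually_ge_atTop x] with y hxy
    exact (intervalIntegral_eq_sub_of_hasDerivWithinAt_Ioi hcont hderiv
      hint.locallyIntegrableOn hx hxy).symm
  have hcov : AECover (volume.restrict (Ioi a)) (𝓝[>] a) Ioi :=
    aecover_Ioi_of_Ioi (tendsto_id.mono_left nhdsWithin_le_nhds)
  refine hcov.integral_eq_of_tendsto _ hint ((tendsto_const_nhds.sub hl).congr' ?_)
  filter_upwards [self_mem_nhdsWithin] with x hx
  rw [Measure.restrict_restrict_of_subset (Ioi_subset_Ioi (le_of_lt hx)), integral_Ioi_of_lt x hx]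

lemma integrableOn_Ioi_of_hasDerivWithinAt_le {f f' φ : ℝ → ℝ} {l m : ℝ}
    (hcont : ContinuousOn f (Ioi a))
    (hderiv : ∀ x ∈ Ioi a, HasDerivWithinAt f (f' x) (Ioi x) x)
    (hloc : LocallyIntegrableOn f' (Ioi a)) (hφ : IntegrableOn φ (Ioi a))
    (hle : ∀ x ∈ Ioi a, f' x ≤ φ x) (hl : ∀ᶠ x in 𝓝[>] a, f x ≤ l)
    (hm : ∀ᶠ x in atTop, m ≤ f x) : IntegrableOn f' (Ioi a) := by
  obtain ⟨u, -, hau, hu⟩ := exists_seq_strictAnti_tendsto a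
  have hu' : Tendsto u atTop (𝓝[>] a) := tendsto_nhdsWithin_iff.2 ⟨hu, Eventually.of_forall hau⟩
  have hcov : AECover (volume.restrict (Ioi a)) atTop fun n : ℕ => Ioc (u n) n :=
    (aecover_Ioi_of_Ioi hu).inter (aecover_Iic tendsto_natCast_atTop_atTop)
  have hsub (n : ℕ) : Ioc (u n) n ⊆ Ioi a := fun x hx => (hau n).trans hx.1
  have hφ_int (n : ℕ) : IntegrableOn φ (Ioc (u n) n) := hφ.mono_set (hsub n)
  have hf'_int (n : ℕ) : IntegrableOn f' (Ioc (u n) n) :=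
    (hloc.integrableOn_compact_subset (fun x hx => (hau n).trans_le hx.1) isCompact_Icc).mono_set
      Ioc_subset_Icc_self
  have hbound : ∀ᶠ n : ℕ in atTop,
      ∫ x in Ioc (u n) n, (φ x - f' x) ≤ (∫ x in Ioi a, |φ x|) + (l - m) := by
    filter_upwards [hu'.eventually hl, tendsto_natCast_atTop_atTop.eventually hm,
      hu.eventually_le_const (lt_add_one a),
      tendsto_natCast_atTop_atTop.eventually_ge_atTop (a + 1)] with n hfu hfn hu_le hn_ge
    have hftc : ∫ x in Ioc (u n) n, f' x = f n - f (u n) := by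
      rw [← intervalIntegral.integral_of_le (hu_le.trans hn_ge)]
      exact intervalIntegral_eq_sub_of_hasDerivWithinAt_Ioi hcont hderiv hloc (hau n)
        (hu_le.trans hn_ge)
    have hφ_le : ∫ x in Ioc (u n) n, φ x ≤ ∫ x in Ioi a, |φ x| :=
      (integral_mono (hφ_int n) (hφ_int n).abs fun x => le_abs_self (φ x)).trans
        (setIntegral_mono_set hφ.abs (ae_of_all _ fun x => abs_nonneg (φ x)) (hsub n).eventuallyLE)
    rw [integral_sub (hφ_int n) (hf'_int n), hftc]
    linarith
  have hdiff : IntegrableOn (fun x => φ x - f' x) (Ioi a) := by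
    refine hcov.integrable_of_integral_bounded_of_nonneg_ae ((∫ x in Ioi a, |φ x|) + (l - m))
      (fun n => ((hφ_int n).sub (hf'_int n)).restrict)
      ((ae_restrict_mem measurableSet_Ioi).mono fun x hx => sub_nonneg.2 (hle x hx)) ?_
    simpa only [Measure.restrict_restrict_of_subset (hsub _)] using hbound
  exact (hφ.sub hdiff).congr (ae_of_all _ fun x => sub_sub_cancel (φ x) (f' x))

end ImproperIntegral

section RightDeriv

variable {V : ℝ → ℝ} {s : Set ℝ} {x y : ℝ}

lemma add_rightDeriv_mul_sub_le (hV : ConvexOn ℝ s V) (hx : s ∈ 𝓝 x) (hy : y ∈ s) :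
    V x + rightDeriv V x * (y - x) ≤ V y := by
  rw [← mem_interior_iff_mem_nhds] at hx
  rcases lt_trichotomy y x with hyx | rfl | hxy
  · have hslope : slope V y x ≤ rightDeriv V x :=
      (hV.slope_le_leftDeriv_of_mem_interior hy hx hyx).trans
        (hV.leftDeriv_le_rightDeriv_of_mem_interior hx)
    rw [slope_def_field, div_le_iff₀ (sub_pos.2 hyx)] at hslope
    linarith
  · simp
  · have hslope : rightDeriv V x ≤ slope V x y := hV.rightDeriv_le_slope_of_mem_interior hx hy hxy
    rw [slope_def_field, le_div_iff₀ (sub_pos.2 hxy)] at hslope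
    linarith

lemma hasDerivWithinAt_Ioi_sub_mul_exp_neg (hV : ConvexOn ℝ s V) (hy : s ∈ 𝓝 y) (p : ℝ) :
    HasDerivWithinAt (fun t => (t - p) * exp (-V t))
      (exp (-V y) - (y - p) * rightDeriv V y * exp (-V y)) (Ioi y) y := by
  have hderiv : HasDerivWithinAt V (rightDeriv V y) (Ioi y) y :=
    hV.hasDerivWithinAt_rightDeriv_of_mem_interior (mem_interior_iff_mem_nhds.2 hy)
  refine (((hasDerivWithinAt_id y _).sub_const p).mul hderiv.fun_neg.exp).congr_deriv ?_
  simp only [id]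
  ring

end RightDeriv

section ConvexOnIoi

variable {V : ℝ → ℝ} {a : ℝ}

lemma monotoneOn_rightDeriv_Ioi (hV : ConvexOn ℝ (Ioi a) V) :
    MonotoneOn (rightDeriv V) (Ioi a) := by
  simpa only [interior_Ioi] using! hV.monotoneOn_rightDeriv

lemma continuousOn_sub_mul_exp_neg (hV : ConvexOn ℝ (Ioi a) V) (p : ℝ) :
    ContinuousOn (fun y => (y - p) * exp (-V y)) (Ioi a) :=
  (continuousOn_id.sub continuousOn_const).mul (hV.continuousOn isOpen_Ioi).neg.rexp

lemma locallyIntegrableOn_sub_mul_rightDeriv_mul_exp_neg (hV : ConvexOn ℝ (Ioi a) V) (p : ℝ) :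
    LocallyIntegrableOn (fun y => (y - p) * rightDeriv V y * exp (-V y)) (Ioi a) := by
  have hderiv : LocallyIntegrableOn (rightDeriv V) (Ioi a) :=
    (locallyIntegrableOn_iff isOpen_Ioi.isLocallyClosed).2 fun _ hsub hcompact =>
      ((monotoneOn_rightDeriv_Ioi hV).mono hsub).integrableOn_isCompact hcompact
  refine (hderiv.continuousOn_mul (continuousOn_sub_mul_exp_neg hV p)
    isOpen_Ioi.isLocallyClosed).congr (ae_of_all _ fun y => ?_)
  ring

lemma exists_rightDeriv_pos_of_integrableOn_exp_neg (hV : ConvexOn ℝ (Ioi a) V)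
    (hint : IntegrableOn (fun y => exp (-V y)) (Ioi a)) : ∃ c ∈ Ioi a, 0 < rightDeriv V c := by
  by_contra! hnonpos
  have hle (y : ℝ) (hy : y ∈ Ioi (a + 1)) : V y ≤ V (a + 1) := by
    have hay : y ∈ Ioi a := (lt_add_one a).trans hy
    have htangent := add_rightDeriv_mul_sub_le hV (Ioi_mem_nhds hay) (lt_add_one a)
    linarith [mul_nonneg_of_nonpos_of_nonpos (hnonpos y hay) (sub_nonpos.2 (le_of_lt hy))]
  have hconst : IntegrableOn (fun _ : ℝ => exp (-V (a + 1))) (Ioi (a + 1)) := by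
    refine Integrable.mono' (hint.mono_set (Ioi_subset_Ioi (lt_add_one a).le))
      aestronglyMeasurable_const ((ae_restrict_mem measurableSet_Ioi).mono fun y hy => ?_)
    rw [norm_of_nonneg (exp_pos _).le]
    exact exp_le_exp.2 (neg_le_neg (hle y hy))
  simp [integrableOn_const_iff, (exp_pos _).ne'] at hconst

lemma exists_exp_neg_le_mul_exp_neg_mul (hV : ConvexOn ℝ (Ioi a) V)
    (hint : IntegrableOn (fun y => exp (-V y)) (Ioi a)) :
    ∃ C k : ℝ, 0 < k ∧ ∀ y ∈ Ioi a, exp (-V y) ≤ C * exp (-k * (y - a)) := by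
  obtain ⟨c, hc, hk⟩ := exists_rightDeriv_pos_of_integrableOn_exp_neg hV hint
  refine ⟨exp (rightDeriv V c * (c - a) - V c), rightDeriv V c, hk, fun y hy => ?_⟩
  rw [← exp_add, exp_le_exp]
  linarith [add_rightDeriv_mul_sub_le hV (Ioi_mem_nhds hc) hy]

lemma tendsto_sub_mul_exp_neg_nhdsGT_and_atTop (hV : ConvexOn ℝ (Ioi a) V)
    (hint : IntegrableOn (fun y => exp (-V y)) (Ioi a)) :
    Tendsto (fun y => (y - a) * exp (-V y)) (𝓝[>] a) (𝓝 0) ∧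
      Tendsto (fun y => (y - a) * exp (-V y)) atTop (𝓝 0) := by
  obtain ⟨C, k, hk, hle⟩ := exists_exp_neg_le_mul_exp_neg_mul hV hint
  have squeeze {u : Filter ℝ} (hu : ∀ᶠ y in u, y ∈ Ioi a)
      (hlim : Tendsto (fun y => (y - a) * (C * exp (-k * (y - a)))) u (𝓝 0)) :
      Tendsto (fun y => (y - a) * exp (-V y)) u (𝓝 0) :=
    squeeze_zero' (hu.mono fun y hy => mul_nonneg (sub_nonneg.2 (le_of_lt hy)) (exp_pos _).le)
      (hu.mono fun y hy => mul_le_mul_of_nonneg_left (hle y hy) (sub_nonneg.2 (le_of_lt hy))) hlim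
  refine ⟨squeeze self_mem_nhdsWithin (tendsto_nhdsWithin_of_tendsto_nhds ?_),
    squeeze (Ioi_mem_atTop a) ?_⟩
  · have hcont : Continuous fun y => (y - a) * (C * exp (-k * (y - a))) := by fun_prop
    simpa only [sub_self, zero_mul] using hcont.tendsto a
  · have hlim : Tendsto (fun t : ℝ => C * (t * exp (-k * t))) atTop (𝓝 0) := by
      simpa only [rpow_one, mul_zero] using
        (tendsto_rpow_mul_exp_neg_mul_atTop_nhds_zero 1 k hk).const_mul C
    exact (hlim.comp (tendsto_atTop_add_const_right atTop (-a) tendsto_id)).congr fun y => by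
      simp only [Function.comp_apply, id, ← sub_eq_add_neg]
      ring

lemma integrableOn_sub_mul_rightDeriv_mul_exp_neg_of_nonneg {c : ℝ} (hV : ConvexOn ℝ (Ioi a) V)
    (hint : IntegrableOn (fun y => exp (-V y)) (Ioi a)) (hc : c ∈ Ioi a)
    (hk : 0 ≤ rightDeriv V c) :
    IntegrableOn (fun y => (y - c) * rightDeriv V y * exp (-V y)) (Ioi a) := by
  have hle (y : ℝ) (hy : y ∈ Ioi a) :
      (a - c) * rightDeriv V c ≤ (y - c) * rightDeriv V y := by
    have hmono := monotoneOn_rightDeriv_Ioi hV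
    have hprod : 0 ≤ (y - c) * (rightDeriv V y - rightDeriv V c) := by
      rcases le_total y c with hyc | hcy
      · exact mul_nonneg_of_nonpos_of_nonpos (sub_nonpos.2 hyc) (sub_nonpos.2 (hmono hy hc hyc))
      · exact mul_nonneg (sub_nonneg.2 hcy) (sub_nonneg.2 (hmono hc hy hcy))
    linarith [mul_nonneg (sub_nonneg.2 (le_of_lt hy)) hk]
  have hderiv_int : IntegrableOn
      (fun y => exp (-V y) - (y - c) * rightDeriv V y * exp (-V y)) (Ioi a) := by
    refine integrableOn_Ioi_of_hasDerivWithinAt_le (l := 0) (m := 0)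
      (φ := fun y => (1 - (a - c) * rightDeriv V c) * exp (-V y))
      (continuousOn_sub_mul_exp_neg hV c)
      (fun y hy => hasDerivWithinAt_Ioi_sub_mul_exp_neg hV (Ioi_mem_nhds hy) c)
      (hint.locallyIntegrableOn.sub (locallyIntegrableOn_sub_mul_rightDeriv_mul_exp_neg hV c))
      (hint.const_mul _) (fun y hy => ?_) ?_ ?_
    · linarith [mul_le_mul_of_nonneg_right (hle y hy) (exp_pos (-V y)).le]
    · filter_upwards [nhdsWithin_le_nhds (Iio_mem_nhds hc)] with y hy
      exact mul_nonpos_of_nonpos_of_nonneg (sub_nonpos.2 (le_of_lt hy)) (exp_pos _).le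
    · filter_upwards [eventually_ge_atTop c] with y hy
      exact mul_nonneg (sub_nonneg.2 hy) (exp_pos _).le
  exact (hint.sub hderiv_int).congr (ae_of_all _ fun y => sub_sub_cancel _ _)

lemma integrableOn_sub_mul_rightDeriv_mul_exp_neg (hV : ConvexOn ℝ (Ioi a) V)
    (hint : IntegrableOn (fun y => exp (-V y)) (Ioi a)) (p : ℝ) :
    IntegrableOn (fun y => (y - p) * rightDeriv V y * exp (-V y)) (Ioi a) := by
  obtain ⟨c, hc, hk⟩ := exists_rightDeriv_pos_of_integrableOn_exp_neg hV hint
  have hc' : c + 1 ∈ Ioi a := lt_trans hc (lt_add_one c)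
  have hk' : 0 ≤ rightDeriv V (c + 1) :=
    hk.le.trans (monotoneOn_rightDeriv_Ioi hV hc hc' (lt_add_one c).le)
  refine (((integrableOn_sub_mul_rightDeriv_mul_exp_neg_of_nonneg hV hint hc hk.le).const_mul
    (c + 1 - p)).add ((integrableOn_sub_mul_rightDeriv_mul_exp_neg_of_nonneg hV hint hc'
    hk').const_mul (p - c))).congr (ae_of_all _ fun y => ?_)
  simp only [Pi.add_apply]
  ring

theorem integral_eq_integral_mul_rightDeriv_general (hV : ConvexOn ℝ (Ioi a) V)
    (hint : IntegrableOn (fun y => exp (-V y)) (Ioi a)) :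
    ∫ y in Ioi a, exp (-V y) = ∫ y in Ioi a, (y - a) * rightDeriv V y * exp (-V y) := by
  have hint' := integrableOn_sub_mul_rightDeriv_mul_exp_neg hV hint a
  obtain ⟨hlim_left, hlim_top⟩ := tendsto_sub_mul_exp_neg_nhdsGT_and_atTop hV hint
  have hftc : ∫ y in Ioi a, (exp (-V y) - (y - a) * rightDeriv V y * exp (-V y)) = 0 - 0 :=
    integral_Ioi_of_hasDerivWithinAt_of_tendsto (continuousOn_sub_mul_exp_neg hV a)
      (fun y hy => hasDerivWithinAt_Ioi_sub_mul_exp_neg hV (Ioi_mem_nhds hy) a)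
      (hint.sub hint') hlim_left hlim_top
  rwa [integral_sub hint hint', sub_zero, sub_eq_zero] at hftc

end ConvexOnIoi

/-- if `V` is convex on `[0, ∞)` with `∫₀^∞ e^{-V} < ∞` and
`∫₀^∞ y e^{-V(y)} dy < ∞`, then `∫₀^∞ e^{-V(y)} dy = ∫₀^∞ y V'₊(y) e^{-V(y)} dy`. -/
theorem integral_eq_integral_mul_rightDeriv (V : ℝ → ℝ) (hV : ConvexOn ℝ (Set.Ici 0) V)
    (h1 : IntegrableOn (fun y => Real.exp (-V y)) (Set.Ioi 0))
    (h2 : IntegrableOn (fun y => y * Real.exp (-V y)) (Set.Ioi 0)) :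
    ∫ y in Set.Ioi (0:ℝ), Real.exp (-V y)
      = ∫ y in Set.Ioi (0:ℝ), y * rightDeriv V y * Real.exp (-V y) := by
  simpa only [sub_zero] using integral_eq_integral_mul_rightDeriv_general
    (hV.subset Ioi_subset_Ici_self (convex_Ioi 0)) h1
end

section
/- Let V : ℝ → ℝ be convex with ∫_ℝ e^{-V(x)} dx < ∞ and ∫_ℝ |x| e^{-V(x)} dx < ∞. Then the mean residual life function m(t) = (∫_t^∞ (x − t) e^{-V(x)} dx) / (∫_t^∞ e^{-V(x)} dx) is nonincreasing in t on ℝ. -/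
open MeasureTheory Real Set

/-!
For `s ≤ t` the substitution `x = u + t` turns `m(t)` into the mean of `u` on `(0, ∞)` under the
weight `u ↦ e^{-V(u + t)}`. Convexity of `V` makes the likelihood ratio
`e^{-V(u + t)} / e^{-V(u + s)}` nonincreasing in `u`, so passing from `s` to `t` moves weight
towards small `u` and the mean can only decrease.
-/

theorem smul_add_smul_add_swap {R M : Type*} [Semiring R] [AddCommMonoid M] [Module R M] {p q : R}
    (hpq : p + q = 1) (x y : M) : (p • x + q • y) + (q • x + p • y) = x + y := by
  rw [add_add_add_comm, ← add_smul, ← add_smul, add_comm q p, hpq, one_smul, one_smul]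

theorem map_add_map_le_of_mem_segment {𝕜 E β : Type*} [Semiring 𝕜] [PartialOrder 𝕜]
    [AddCommGroup E] [Module 𝕜 E] [AddCommMonoid β] [PartialOrder β] [IsOrderedAddMonoid β]
    [Module 𝕜 β] {s : Set E} {f : E → β} (hf : ConvexOn 𝕜 s f) {x y a b : E} (hx : x ∈ s)
    (hy : y ∈ s) (ha : a ∈ segment 𝕜 x y) (hab : a + b = x + y) :
    f a + f b ≤ f x + f y := by
  obtain ⟨p, q, hp, hq, hpq, rfl⟩ := ha
  obtain rfl : b = q • x + p • y :=
    add_left_cancel (hab.trans (smul_add_smul_add_swap hpq x y).symm)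
  calc f (p • x + q • y) + f (q • x + p • y)
      ≤ (p • f x + q • f y) + (q • f x + p • f y) :=
        add_le_add (hf.2 hx hy hp hq hpq) (hf.2 hx hy hq hp ((add_comm q p).trans hpq))
    _ = f x + f y := smul_add_smul_add_swap hpq (f x) (f y)

theorem exp_neg_mul_exp_neg_add_le {s : Set ℝ} {V : ℝ → ℝ} (hV : ConvexOn ℝ s V) {x y h : ℝ}
    (hx : x ∈ s) (hyh : y + h ∈ s) (hxy : x ≤ y) (hh : 0 ≤ h) :
    exp (-V x) * exp (-V (y + h)) ≤ exp (-V y) * exp (-V (x + h)) := by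
  have hy : y ∈ segment ℝ x (y + h) := Icc_subset_segment ⟨hxy, by linarith⟩
  have hsum : V y + V (x + h) ≤ V x + V (y + h) :=
    map_add_map_le_of_mem_segment hV hx hyh hy (by ring)
  rw [← exp_add, ← exp_add, exp_le_exp]
  linarith

theorem setIntegral_Ioi_comp_add_right {E : Type*} [NormedAddCommGroup E] [NormedSpace ℝ E]
    (g : ℝ → E) (c t : ℝ) : ∫ u in Ioi c, g (u + t) = ∫ x in Ioi (c + t), g x := by
  simpa using (measurePreserving_add_right volume t).setIntegral_preimage_emb
    (measurableEmbedding_addRight t) g (Ioi (c + t))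

theorem integrableOn_Ioi_comp_add_right_iff {E : Type*} [NormedAddCommGroup E]
    {g : ℝ → E} {c t : ℝ} :
    IntegrableOn (fun u => g (u + t)) (Ioi c) ↔ IntegrableOn g (Ioi (c + t)) := by
  simpa [Function.comp_def] using (measurePreserving_add_right volume t).integrableOn_comp_preimage
    (measurableEmbedding_addRight t) (f := g) (s := Ioi (c + t))

theorem integral_prod_mul_add_mul {α β : Type*} [MeasurableSpace α] [MeasurableSpace β]
    {μ : Measure α} {ν : Measure β} [SFinite μ] [SFinite ν] {f₁ f₂ : α → ℝ} {g₁ g₂ : β → ℝ}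
    (hf₁ : Integrable f₁ μ) (hg₁ : Integrable g₁ ν) (hf₂ : Integrable f₂ μ)
    (hg₂ : Integrable g₂ ν) :
    ∫ p, (f₁ p.1 * g₁ p.2 + f₂ p.1 * g₂ p.2) ∂μ.prod ν =
      (∫ x, f₁ x ∂μ) * ∫ y, g₁ y ∂ν + (∫ x, f₂ x ∂μ) * ∫ y, g₂ y ∂ν := by
  rw [integral_add (hf₁.mul_prod hg₁) (hf₂.mul_prod hg₂), integral_prod_mul, integral_prod_mul]

/-- The hypothesis `hfg` is the division-free form of a monotone likelihood ratio: `g / f` does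
not increase where `φ` increases. -/
theorem setIntegral_mul_mul_setIntegral_le {α : Type*} [MeasurableSpace α] {μ : Measure α}
    [SFinite μ] {s : Set α} (hs : MeasurableSet s) {φ f g : α → ℝ} (hf : IntegrableOn f s μ)
    (hg : IntegrableOn g s μ) (hφf : IntegrableOn (fun x => φ x * f x) s μ)
    (hφg : IntegrableOn (fun x => φ x * g x) s μ)
    (hfg : ∀ x ∈ s, ∀ y ∈ s, φ x < φ y → f x * g y ≤ f y * g x) :
    (∫ x in s, φ x * g x ∂μ) * ∫ x in s, f x ∂μ ≤
      (∫ x in s, φ x * f x ∂μ) * ∫ x in s, g x ∂μ := by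
  -- This is `(φ x - φ y) * (f y * g x - f x * g y) ≤ 0`; integrated over `s × s`, each side
  -- becomes twice the corresponding side of the claim.
  have pointwise : ∀ x ∈ s, ∀ y ∈ s,
      φ x * g x * f y + f x * (φ y * g y) ≤ φ x * f x * g y + g x * (φ y * f y) := by
    intro x hx y hy
    rcases lt_trichotomy (φ x) (φ y) with hlt | heq | hgt
    · nlinarith [hfg x hx y hy hlt]
    · rw [heq]; linarith
    · nlinarith [hfg y hy x hx hgt]
  have pointwise_ae : ∀ᵐ p ∂(μ.restrict s).prod (μ.restrict s),
      φ p.1 * g p.1 * f p.2 + f p.1 * (φ p.2 * g p.2) ≤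
        φ p.1 * f p.1 * g p.2 + g p.1 * (φ p.2 * f p.2) := by
    rw [Measure.prod_restrict]
    exact ae_restrict_of_forall_mem (hs.prod hs) fun p hp => pointwise p.1 hp.1 p.2 hp.2
  have double := integral_mono_ae ((hφg.mul_prod hf).add (hf.mul_prod hφg))
    ((hφf.mul_prod hg).add (hg.mul_prod hφf)) pointwise_ae
  simp only [Pi.add_apply] at double
  rw [integral_prod_mul_add_mul hφg hf hf hφg, integral_prod_mul_add_mul hφf hg hg hφf] at double
  linarith

/-- The mean residual life `m(t)` of a lifetime with (unnormalised) density `w`. It is the junk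
value `0` when `w` has no mass beyond `t`. -/
noncomputable def meanResidualLife (w : ℝ → ℝ) (t : ℝ) : ℝ :=
  (∫ x in Ioi t, (x - t) * w x) / ∫ x in Ioi t, w x

theorem meanResidualLife_eq_div_integral_comp_add (w : ℝ → ℝ) (t : ℝ) :
    meanResidualLife w t =
      (∫ u in Ioi 0, u * w (u + t)) / ∫ u in Ioi 0, w (u + t) := by
  have hnum := setIntegral_Ioi_comp_add_right (fun x => (x - t) * w x) 0 t
  have hden := setIntegral_Ioi_comp_add_right w 0 t
  simp only [add_sub_cancel_right, zero_add] at hnum hden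
  rw [meanResidualLife, hnum, hden]

theorem integrableOn_mul_comp_add_right {w : ℝ → ℝ} {t : ℝ} (hw : IntegrableOn w (Ioi t))
    (hxw : IntegrableOn (fun x => x * w x) (Ioi t)) :
    IntegrableOn (fun u => u * w (u + t)) (Ioi 0) := by
  have hsub : IntegrableOn (fun x => (x - t) * w x) (Ioi (0 + t)) := by
    simp only [zero_add, sub_mul]
    exact hxw.sub (hw.const_mul t)
  simpa only [add_sub_cancel_right] using integrableOn_Ioi_comp_add_right_iff.2 hsub

/-- The hypothesis `hratio` is the translation form of log-concavity of `w` beyond `a`. -/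
theorem antitoneOn_meanResidualLife {w : ℝ → ℝ} {a : ℝ} (hw : IntegrableOn w (Ioi a))
    (hxw : IntegrableOn (fun x => x * w x) (Ioi a)) (hpos : ∀ t ≥ a, 0 < ∫ x in Ioi t, w x)
    (hratio : ∀ x > a, ∀ y ≥ x, ∀ h ≥ 0, w x * w (y + h) ≤ w y * w (x + h)) :
    AntitoneOn (meanResidualLife w) (Ici a) := by
  intro s hs t ht hst
  have hshift (r : ℝ) (hr : a ≤ r) : IntegrableOn (fun u => w (u + r)) (Ioi 0) := by
    rw [integrableOn_Ioi_comp_add_right_iff, zero_add]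
    exact hw.mono_set (Ioi_subset_Ioi hr)
  have hmoment (r : ℝ) (hr : a ≤ r) : IntegrableOn (fun u => u * w (u + r)) (Ioi 0) :=
    integrableOn_mul_comp_add_right (hw.mono_set (Ioi_subset_Ioi hr))
      (hxw.mono_set (Ioi_subset_Ioi hr))
  have hmass (r : ℝ) (hr : a ≤ r) : 0 < ∫ u in Ioi 0, w (u + r) := by
    simpa only [setIntegral_Ioi_comp_add_right, zero_add] using hpos r hr
  have hcross : ∀ x ∈ Ioi (0 : ℝ), ∀ y ∈ Ioi (0 : ℝ), x < y →
      w (x + s) * w (y + t) ≤ w (y + s) * w (x + t) := by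
    intro x hx y _ hxy
    have hax : a < x + s := by linarith [mem_Ioi.1 hx, mem_Ici.1 hs]
    simpa only [add_assoc, add_sub_cancel] using
      hratio (x + s) hax (y + s) (by linarith) (t - s) (sub_nonneg.2 hst)
  rw [meanResidualLife_eq_div_integral_comp_add, meanResidualLife_eq_div_integral_comp_add,
    div_le_div_iff₀ (hmass t ht) (hmass s hs)]
  exact setIntegral_mul_mul_setIntegral_le measurableSet_Ioi (hshift s hs) (hshift t ht)
    (hmoment s hs) (hmoment t ht) hcross

theorem meanResidualLife_antitone_general {V : ℝ → ℝ} {a : ℝ} (hV : ConvexOn ℝ (Ioi a) V)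
    (h1 : IntegrableOn (fun x => exp (-V x)) (Ioi a))
    (h2 : IntegrableOn (fun x => |x| * exp (-V x)) (Ioi a)) :
    AntitoneOn (meanResidualLife fun x => exp (-V x)) (Ici a) := by
  have hmoment : IntegrableOn (fun x => x * exp (-V x)) (Ioi a) :=
    h2.congr' (aestronglyMeasurable_id.mul h1.1) (ae_of_all _ fun x => by simp)
  have hpos : ∀ t ≥ a, 0 < ∫ x in Ioi t, exp (-V x) := fun t ht =>
    have : NeZero (volume.restrict (Ioi t)) := ⟨by simp⟩
    integral_exp_pos (h1.mono_set (Ioi_subset_Ioi ht))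
  exact antitoneOn_meanResidualLife h1 hmoment hpos fun x hx y hxy h hh =>
    exp_neg_mul_exp_neg_add_le hV hx (by simp only [mem_Ioi]; linarith) hxy hh

/-- if `V : ℝ → ℝ` is convex with `∫ e^{-V} < ∞` and `∫ |x| e^{-V(x)} dx < ∞`,
then the mean residual life function
`m(t) = (∫_t^∞ (x − t) e^{-V(x)} dx) / (∫_t^∞ e^{-V(x)} dx)` is nonincreasing on `ℝ`. -/
theorem meanResidualLife_antitone (V : ℝ → ℝ) (hV : ConvexOn ℝ Set.univ V)
    (h1 : Integrable (fun x => Real.exp (-V x)))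
    (h2 : Integrable (fun x => |x| * Real.exp (-V x))) :
    Antitone (fun t : ℝ =>
      (∫ x in Set.Ioi t, (x - t) * Real.exp (-V x)) / ∫ x in Set.Ioi t, Real.exp (-V x)) :=
  fun s _ hst => meanResidualLife_antitone_general (hV.subset (subset_univ _) (convex_Ioi s))
    h1.integrableOn h2.integrableOn self_mem_Ici hst hst
end

section
/- Let X be a real random variable, G : ℝ → ℝ convex, and fix α, β ∈ ℝ, assuming E[G(X − α)] and E[G(X − β)] are finite. Set A_{α,β} = {x ∈ ℝ : G(x − α) ≤ G(x − β)}. Then for every Borel set A ⊆ ℝ, E[G(X − α)·1_{A_{α,β}}(X) + G(X − β)·1_{A_{α,β}^c}(X)] ≤ E[G(X − α)·1_A(X) + G(X − β)·1_{A^c}(X)]. Moreover, if α < β then A_{α,β} is an interval of the form (−∞, u₀], the empty set, or all of ℝ (i.e. it is a lower set of ℝ). -/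
open MeasureTheory Real Set

open scoped Classical

/-!
Choosing by `A_{α,β}` incurs the loss `min (G (X - α)) (G (X - β))`, which is a pointwise lower
bound for the loss incurred by any other set. For `α ≤ β`, convexity makes the difference
`x ↦ G (x - α) - G (x - β)` monotone, and `A_{α,β}` is where this difference is nonpositive.
-/

section Convex

theorem map_add_map_add_sub_le_of_convexOn {𝕜 E F : Type*} [Ring 𝕜] [PartialOrder 𝕜]
    [AddCommGroup E] [Module 𝕜 E] [AddCommMonoid F] [PartialOrder F] [IsOrderedAddMonoid F]
    [Module 𝕜 F] {s : Set E} {f : E → F} (hf : ConvexOn 𝕜 s f) {x y z : E} (hx : x ∈ s)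
    (hy : y ∈ s) (hz : z ∈ segment 𝕜 x y) : f z + f (x + y - z) ≤ f x + f y := by
  obtain ⟨a, b, ha, hb, hab, rfl⟩ := hz
  have hba : b + a = 1 := by rwa [add_comm]
  have reflect : x + y - (a • x + b • y) = b • x + a • y := by
    rw [← one_smul 𝕜 (x + y), ← hab, smul_add, add_smul, add_smul]
    abel
  calc f (a • x + b • y) + f (x + y - (a • x + b • y))
    _ ≤ (a • f x + b • f y) + (b • f x + a • f y) := by
      rw [reflect]
      exact add_le_add (hf.2 hx hy ha hb hab) (hf.2 hx hy hb ha hba)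
    _ = (a + b) • f x + (a + b) • f y := by
      rw [add_smul, add_smul]
      abel
    _ = f x + f y := by rw [hab, one_smul, one_smul]

variable {𝕜 F : Type*} [Field 𝕜] [LinearOrder 𝕜] [IsStrictOrderedRing 𝕜] [AddCommGroup F]
  [PartialOrder F] [IsOrderedAddMonoid F] [Module 𝕜 F] {f : 𝕜 → F} {a b : 𝕜}

theorem monotone_sub_translate_of_convexOn (hf : ConvexOn 𝕜 univ f) (hab : a ≤ b) :
    Monotone fun x => f (x - a) - f (x - b) := by
  intro y x hyx
  have between : y - a ∈ segment 𝕜 (y - b) (x - a) := by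
    rw [segment_eq_Icc (by linarith)]
    exact ⟨by linarith, by linarith⟩
  have exchange := map_add_map_add_sub_le_of_convexOn hf (mem_univ _) (mem_univ _) between
  rw [show y - b + (x - a) - (y - a) = x - b by ring] at exchange
  rw [sub_le_sub_iff, add_comm (f (x - a))]
  exact exchange

theorem isLowerSet_setOf_translate_le_translate (hf : ConvexOn 𝕜 univ f) (hab : a ≤ b) :
    IsLowerSet {x | f (x - a) ≤ f (x - b)} := by
  intro x y hyx hx
  exact sub_nonpos.mp
    ((monotone_sub_translate_of_convexOn hf hab hyx).trans (sub_nonpos.mpr hx))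

end Convex

section Integral

theorem piecewise_setOf_le_eq_inf {ι R : Type*} [LinearOrder R] (f g : ι → R)
    [DecidablePred (· ∈ {i | f i ≤ g i})] : {i | f i ≤ g i}.piecewise f g = f ⊓ g := by
  ext i
  by_cases hi : i ∈ {i | f i ≤ g i}
  · rw [piecewise_eq_of_mem _ _ _ hi]
    exact (inf_eq_left.mpr hi).symm
  · rw [piecewise_eq_of_notMem _ _ _ hi]
    exact (inf_eq_right.mpr (le_of_not_ge hi)).symm

variable {Ω : Type*} [MeasurableSpace Ω] {μ : Measure Ω} {s : Set Ω} [DecidablePred (· ∈ s)]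

theorem integrable_piecewise_of_nullMeasurableSet {E : Type*} [NormedAddCommGroup E]
    {f g : Ω → E} (hs : NullMeasurableSet s μ) (hf : Integrable f μ) (hg : Integrable g μ) :
    Integrable (s.piecewise f g) μ := by
  rw [← indicator_add_compl_eq_piecewise]
  exact (hf.indicator₀ hs).add (hg.indicator₀ hs.compl)

theorem integral_inf_le_integral_piecewise {E : Type*} [NormedAddCommGroup E] [NormedSpace ℝ E]
    [Lattice E] [HasSolidNorm E] [IsOrderedAddMonoid E] [IsOrderedModule ℝ E]
    {f g : Ω → E} (hs : NullMeasurableSet s μ) (hf : Integrable f μ) (hg : Integrable g μ) :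
    ∫ ω, (f ⊓ g) ω ∂μ ≤ ∫ ω, s.piecewise f g ω ∂μ :=
  integral_mono (hf.inf hg) (integrable_piecewise_of_nullMeasurableSet hs hf hg)
    (le_piecewise (fun _ _ => inf_le_left) fun _ _ => inf_le_right)

theorem integral_piecewise_setOf_le_le {f g : Ω → ℝ} [DecidablePred (· ∈ {ω | f ω ≤ g ω})]
    (hs : NullMeasurableSet s μ) (hf : Integrable f μ) (hg : Integrable g μ) :
    ∫ ω, {ω | f ω ≤ g ω}.piecewise f g ω ∂μ ≤ ∫ ω, s.piecewise f g ω ∂μ := by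
  rw [piecewise_setOf_le_eq_inf]
  exact integral_inf_le_integral_piecewise hs hf hg

end Integral

theorem optimal_regime_set_halfline_general {Ω : Type*} [MeasurableSpace Ω]
    (P : Measure Ω) (X : Ω → ℝ) (G : ℝ → ℝ) (α β : ℝ)
    (hint1 : Integrable (fun ω => G (X ω - α)) P)
    (hint2 : Integrable (fun ω => G (X ω - β)) P) :
    (∀ A : Set ℝ, NullMeasurableSet (X ⁻¹' A) P →
      (∫ ω, (if X ω ∈ {x : ℝ | G (x - α) ≤ G (x - β)}
          then G (X ω - α) else G (X ω - β)) ∂P)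
        ≤ ∫ ω, (if X ω ∈ A then G (X ω - α) else G (X ω - β)) ∂P)
      ∧ (ConvexOn ℝ univ G → α ≤ β → IsLowerSet {x : ℝ | G (x - α) ≤ G (x - β)}) :=
  ⟨fun _ hA => integral_piecewise_setOf_le_le hA hint1 hint2,
    isLowerSet_setOf_translate_le_translate⟩

/-- for a convex loss `G` and fixed `α, β`, the set
`A_{α,β} = {x : G(x−α) ≤ G(x−β)}` minimizes
`A ↦ E[G(X−α)·1_A(X) + G(X−β)·1_{A^c}(X)]` over Borel sets `A ⊆ ℝ`; moreover if `α < β` then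
`A_{α,β}` is a lower set of `ℝ` (i.e. of the form `(−∞, u₀]`, `∅`, or `ℝ`). -/
theorem optimal_regime_set_halfline {Ω : Type*} [MeasurableSpace Ω]
    (P : Measure Ω) [IsProbabilityMeasure P] (X : Ω → ℝ) (hX : Measurable X)
    (G : ℝ → ℝ) (hG : ConvexOn ℝ Set.univ G) (α β : ℝ)
    (hint1 : Integrable (fun ω => G (X ω - α)) P)
    (hint2 : Integrable (fun ω => G (X ω - β)) P) :
    (∀ A : Set ℝ, MeasurableSet A →
      (∫ ω, (if X ω ∈ {x : ℝ | G (x - α) ≤ G (x - β)}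
          then G (X ω - α) else G (X ω - β)) ∂P)
        ≤ ∫ ω, (if X ω ∈ A then G (X ω - α) else G (X ω - β)) ∂P)
      ∧ (α < β → IsLowerSet {x : ℝ | G (x - α) ≤ G (x - β)}) := by
  obtain ⟨minimal, lower⟩ := optimal_regime_set_halfline_general P X G α β hint1 hint2
  exact ⟨fun A hA => minimal A (hX hA).nullMeasurableSet, fun hαβ => lower hG hαβ.le⟩
end

section
/- Let G : ℝ^d → ℝ be convex, α, β ∈ ℝ^d with δ = β − α, and A_{α,β} = {x ∈ ℝ^d : G(x − α) ≤ G(x − β)}. Then for every z ∈ ℝ^d, the set {s ∈ ℝ : z + sδ ∈ A_{α,β}} is a lower set of ℝ, i.e. the intersection of A_{α,β} with the affine line z + ℝδ is (parametrized by s) either empty, all of ℝ, or a half-line of the form (−∞, s₀] or (−∞, s₀). -/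
open MeasureTheory Real Set

/-!
Along a line in direction `δ`, a convex function has monotone increments
`s ↦ G (x + s • δ + δ) - G (x + s • δ)`: for `s ≤ t` the points at parameters `t` and `s + 1` lie
between those at `s` and `t + 1` and have the same sum, and moving two points towards each other
with fixed sum does not increase the sum of the values of a convex function. With `x = z - β` this
increment is `G (z + s • δ - α) - G (z + s • δ - β)`, and `A_{α,β}` cuts out its nonpositivity set.
-/

theorem add_smul_mem_segment {𝕜 E : Type*} [Ring 𝕜] [PartialOrder 𝕜] [AddRightMono 𝕜]
    [AddCommGroup E] [Module 𝕜 E] {a b t : 𝕜} (ht : t ∈ segment 𝕜 a b) (x v : E) :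
    x + t • v ∈ segment 𝕜 (x + a • v) (x + b • v) := by
  rw [mem_segment_translate]
  exact image_segment 𝕜 (LinearMap.toSpanSingleton 𝕜 E v).toAffineMap a b ▸ mem_image_of_mem _ ht

theorem map_add_map_le_of_convexOn_of_mem_segment {𝕜 E F : Type*} [Semiring 𝕜] [PartialOrder 𝕜]
    [AddCommGroup E] [Module 𝕜 E]
    [AddCommMonoid F] [PartialOrder F] [IsOrderedAddMonoid F] [Module 𝕜 F]
    {S : Set E} {f : E → F} (hf : ConvexOn 𝕜 S f) {p q x y : E} (hp : p ∈ S) (hq : q ∈ S)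
    (hx : x ∈ segment 𝕜 p q) (hxy : x + y = p + q) :
    f x + f y ≤ f p + f q := by
  obtain ⟨a, b, ha, hb, hab, rfl⟩ := hx
  have hba : b + a = 1 := by rw [add_comm, hab]
  have hy : y = b • p + a • q := by
    apply add_left_cancel (a := a • p + b • q)
    calc a • p + b • q + y = (a + b) • p + (a + b) • q := by rw [hxy, hab, one_smul, one_smul]
      _ = a • p + b • q + (b • p + a • q) := by simp only [add_smul]; abel
  calc f (a • p + b • q) + f y
      ≤ (a • f p + b • f q) + (b • f p + a • f q) :=
        add_le_add (hf.2 hp hq ha hb hab) (hy ▸ hf.2 hp hq hb ha hba)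
    _ = (a + b) • f p + (a + b) • f q := by simp only [add_smul]; abel
    _ = f p + f q := by rw [hab, one_smul, one_smul]

section Increments

variable {𝕜 E F : Type*} [Field 𝕜] [LinearOrder 𝕜] [IsStrictOrderedRing 𝕜]
  [AddCommGroup E] [Module 𝕜 E]
  [AddCommGroup F] [PartialOrder F] [IsOrderedAddMonoid F] [Module 𝕜 F]

theorem monotoneOn_increment_of_convexOn {S : Set E} {f : E → F} (hf : ConvexOn 𝕜 S f) (x δ : E) :
    MonotoneOn (fun s : 𝕜 ↦ f (x + s • δ + δ) - f (x + s • δ))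
      {s | x + s • δ ∈ S ∧ x + s • δ + δ ∈ S} := by
  intro s hs t ht hst
  have ht_mem : t ∈ segment 𝕜 s (t + 1) := by
    rw [segment_eq_Icc (by linarith)]
    exact ⟨hst, by linarith⟩
  have hx_mem : x + t • δ ∈ segment 𝕜 (x + s • δ) (x + t • δ + δ) := by
    simpa only [add_smul, one_smul, add_assoc] using add_smul_mem_segment ht_mem x δ
  have hsum : f (x + t • δ) + f (x + s • δ + δ) ≤ f (x + s • δ) + f (x + t • δ + δ) :=
    map_add_map_le_of_convexOn_of_mem_segment hf hs.1 ht.2 hx_mem (by abel)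
  rw [sub_le_sub_iff]
  simpa only [add_comm] using hsum

theorem directional_one_crossing_general {G : E → F} (hG : ConvexOn 𝕜 univ G)
    {α β δ : E} (hδ : δ = β - α) (z : E) :
    IsLowerSet {s : 𝕜 | z + s • δ ∈ {x : E | G (x - α) ≤ G (x - β)}} := by
  have hmono : Monotone fun s : 𝕜 ↦ G (z + s • δ - α) - G (z + s • δ - β) := by
    have hα (s : 𝕜) : z + s • δ - α = z - β + s • δ + δ := by rw [hδ]; abel
    have hβ (s : 𝕜) : z + s • δ - β = z - β + s • δ := by abel
    simpa only [hα, hβ, mem_univ, and_self, ofPred_true, monotoneOn_univ]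
      using monotoneOn_increment_of_convexOn hG (z - β) δ
  intro t s hst ht
  exact sub_nonpos.mp ((hmono hst).trans (sub_nonpos.mpr ht))

end Increments

/-- for a convex `G : ℝ^d → ℝ`, `α, β ∈ ℝ^d` with `δ = β − α`, and
`A_{α,β} = {x : G(x−α) ≤ G(x−β)}`, for every `z ∈ ℝ^d` the set
`{s ∈ ℝ : z + sδ ∈ A_{α,β}}` is a lower set of `ℝ` (empty, all of `ℝ`, or a half-line
`(−∞, s₀]` or `(−∞, s₀)`). -/
theorem directional_one_crossing {d : ℕ}
    (G : EuclideanSpace ℝ (Fin d) → ℝ) (hG : ConvexOn ℝ Set.univ G)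
    (α β : EuclideanSpace ℝ (Fin d)) (δ : EuclideanSpace ℝ (Fin d)) (hδ : δ = β - α) :
    ∀ z : EuclideanSpace ℝ (Fin d),
      IsLowerSet {s : ℝ | z + s • δ ∈
        {x : EuclideanSpace ℝ (Fin d) | G (x - α) ≤ G (x - β)}} :=
  directional_one_crossing_general hG hδ
end

section
/- Let X be a random vector in ℝ^d whose law has density x ↦ C·g(xᵀΣ⁻¹x) with respect to Lebesgue measure, where Σ is a positive definite d×d matrix, g : [0, ∞) → [0, ∞) is measurable, C > 0 is the normalizing constant, and E[‖X‖] < ∞ (so X is centered elliptical with E[X] = 0). Let u, v ∈ ℝ^d be linearly independent. Then the conditional expectation of ⟨X, u⟩ given the σ-algebra generated by ⟨X, v⟩ satisfies E[⟨X, u⟩ | σ(⟨X, v⟩)] = (uᵀΣv / vᵀΣv) · ⟨X, v⟩ almost surely. -/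
open MeasureTheory Real Set
open scoped RealInnerProductSpace

/-!
Let `w = Σ v` and let `T` be the linear symmetry of `ℝ^d` that fixes `w` and is `-1` on the
hyperplane `v⊥`. The hyperplane `v⊥` is the orthogonal complement of `w` for the form
`x ↦ xᵀ Σ⁻¹ x`, so `T` preserves this form; being an involution it also preserves Lebesgue measure,
hence `X` and `T X` have the same law. The residual `⟨X, u⟩ - (uᵀ Σ v / vᵀ Σ v) ⟨X, v⟩` is a linear
functional of `X` vanishing at `w`, so `T` changes its sign while leaving `⟨X, v⟩` unchanged.
Its conditional expectation given `⟨X, v⟩` is therefore equal to its own negative.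
-/

section AxialSymmetry

variable {K E : Type*} [Field K] [AddCommGroup E] [Module K E]

/-- The linear symmetry `x ↦ 2 (v x / v w) w - x`, which fixes `w` and is `-1` on the hyperplane
`ker v`. It is the negative of a `Module.reflection`, and is meant for `v w ≠ 0`. -/
def axialSymmetry (v : Module.Dual K E) (w : E) : E →ₗ[K] E :=
  (2 / v w) • v.smulRight w - LinearMap.id

variable {v : Module.Dual K E} {w : E}

lemma axialSymmetry_apply (x : E) : axialSymmetry v w x = (2 / v w) • v x • w - x := rfl

lemma apply_axialSymmetry (u : Module.Dual K E) (x : E) :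
    u (axialSymmetry v w x) = 2 * (u w / v w * v x) - u x := by
  simp only [axialSymmetry_apply, map_sub, map_smul, smul_eq_mul]
  ring

lemma apply_axialSymmetry_self (hw : v w ≠ 0) (x : E) : v (axialSymmetry v w x) = v x := by
  rw [apply_axialSymmetry, div_self hw]
  ring

lemma involutive_axialSymmetry (hw : v w ≠ 0) : Function.Involutive (axialSymmetry v w) := by
  intro x
  rw [axialSymmetry_apply (axialSymmetry v w x), apply_axialSymmetry_self hw, axialSymmetry_apply,
    sub_sub_cancel]

lemma bilinForm_axialSymmetry_self {B : LinearMap.BilinForm K E} (hB : B.IsSymm) (hBw : B w = v)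
    (hw : v w ≠ 0) (x : E) : B (axialSymmetry v w x) (axialSymmetry v w x) = B x x := by
  have hBxw : B x w = v x := by rw [hB.eq, hBw]
  simp only [axialSymmetry_apply, map_sub, map_smul, LinearMap.sub_apply, LinearMap.smul_apply,
    smul_eq_mul, hBw, hBxw]
  field_simp
  ring

end AxialSymmetry

lemma abs_det_eq_one_of_involutive {R M : Type*} [CommRing R] [LinearOrder R]
    [IsStrictOrderedRing R] [AddCommGroup M] [Module R M] {T : M →ₗ[R] M}
    (hT : Function.Involutive T) : |LinearMap.det T| = 1 := by
  have hTT : T ∘ₗ T = LinearMap.id := LinearMap.ext hT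
  have hdet : LinearMap.det T * LinearMap.det T = 1 := by
    rw [← LinearMap.det_comp, hTT, LinearMap.det_id]
  exact (abs_eq zero_le_one).2 (mul_self_eq_one_iff.1 hdet)

lemma measurePreserving_linearMap_of_abs_det_eq_one {E : Type*} [NormedAddCommGroup E]
    [NormedSpace ℝ E] [FiniteDimensional ℝ E] [MeasurableSpace E] [BorelSpace E] (μ : Measure E)
    [μ.IsAddHaarMeasure] {T : E →ₗ[ℝ] E} (hT : |LinearMap.det T| = 1) :
    MeasurePreserving T μ μ := by
  have hdet : LinearMap.det T ≠ 0 := abs_pos.1 (hT ▸ one_pos)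
  refine ⟨T.continuous_of_finiteDimensional.measurable, ?_⟩
  rw [Measure.map_linearMap_addHaar_eq_smul_addHaar μ hdet, abs_inv, hT, inv_one,
    ENNReal.ofReal_one, one_smul]

lemma measurePreserving_withDensity_comp {α β : Type*} [MeasurableSpace α] [MeasurableSpace β]
    {μ : Measure α} {ν : Measure β} {T : α → β} (hT : MeasurePreserving T μ ν)
    (hTe : MeasurableEmbedding T) (f : β → ENNReal) :
    MeasurePreserving T (μ.withDensity (f ∘ T)) (ν.withDensity f) := by
  refine ⟨hT.measurable, Measure.ext fun s hs => ?_⟩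
  rw [Measure.map_apply hT.measurable hs, withDensity_apply _ (hT.measurable hs),
    withDensity_apply _ hs, ← hT.setLIntegral_comp_preimage_emb hTe]
  rfl

lemma measurePreserving_axialSymmetry_withDensity {E : Type*} [NormedAddCommGroup E]
    [NormedSpace ℝ E] [FiniteDimensional ℝ E] [MeasurableSpace E] [BorelSpace E] (μ : Measure E)
    [μ.IsAddHaarMeasure] {B : LinearMap.BilinForm ℝ E} (hB : B.IsSymm) {v : Module.Dual ℝ E}
    {w : E} (hBw : B w = v) (hw : v w ≠ 0) (φ : ℝ → ENNReal) :
    MeasurePreserving (axialSymmetry v w) (μ.withDensity fun x => φ (B x x))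
      (μ.withDensity fun x => φ (B x x)) := by
  have hinv := involutive_axialSymmetry hw
  have hμ := measurePreserving_linearMap_of_abs_det_eq_one μ (abs_det_eq_one_of_involutive hinv)
  have hemb := (MeasurableEquiv.ofInvolutive _ hinv hμ.measurable).measurableEmbedding
  simpa only [Function.comp_def, bilinForm_axialSymmetry_self hB hBw hw] using
    measurePreserving_withDensity_comp hμ hemb fun x => φ (B x x)

section Probability

open ProbabilityTheory

variable {Ω : Type*} [MeasurableSpace Ω] {P : Measure Ω}

lemma identDistrib_comp_of_measurePreserving_map {β : Type*} [MeasurableSpace β] {X : Ω → β}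
    (hX : AEMeasurable X P) {T : β → β} (hT : MeasurePreserving T (P.map X) (P.map X)) :
    IdentDistrib X (T ∘ X) P P where
  aemeasurable_fst := hX
  aemeasurable_snd := hT.measurable.comp_aemeasurable hX
  map_eq := by
    rw [← AEMeasurable.map_map_of_aemeasurable hT.aemeasurable hX, hT.map_eq]

lemma condExp_comap_ae_eq_zero_of_identDistrib_neg [IsFiniteMeasure P] {β F : Type*}
    [MeasurableSpace β] [NormedAddCommGroup F] [NormedSpace ℝ F] [CompleteSpace F]
    [MeasurableSpace F] [BorelSpace F] {Z : Ω → β} {Y : Ω → F} (hZ : Measurable Z)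
    (hY : Integrable Y P)
    (h : IdentDistrib (fun ω => (Z ω, Y ω)) (fun ω => (Z ω, -Y ω)) P P) :
    P[Y | MeasurableSpace.comap Z inferInstance] =ᵐ[P] 0 := by
  refine (ae_eq_condExp_of_forall_setIntegral_eq hZ.comap_le hY
    (fun _ _ _ => integrableOn_zero) ?_ aestronglyMeasurable_zero).symm
  rintro _ ⟨s, hs, rfl⟩ -
  have hindicator : Measurable fun p : β × F => (Prod.fst ⁻¹' s).indicator Prod.snd p :=
    measurable_snd.indicator (measurable_fst hs)
  have hneg : ∫ ω in Z ⁻¹' s, Y ω ∂P = ∫ ω in Z ⁻¹' s, -Y ω ∂P := by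
    rw [← integral_indicator (hZ hs), ← integral_indicator (hZ hs)]
    exact (h.comp hindicator).integral_eq
  have : IsAddTorsionFree F := .of_isTorsionFree ℝ F
  rw [integral_neg, self_eq_neg] at hneg
  simp only [integral_zero, hneg]

variable [IsFiniteMeasure P] {E : Type*} [NormedAddCommGroup E] [NormedSpace ℝ E]
  [FiniteDimensional ℝ E] [MeasurableSpace E] [BorelSpace E] {μ : Measure E} [μ.IsAddHaarMeasure]
  {X : Ω → E} {B : LinearMap.BilinForm ℝ E} {φ : ℝ → ENNReal} {v : Module.Dual ℝ E} {w : E}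

lemma condExp_dual_ae_eq_zero_of_apply_eq_zero (hX : Measurable X) (hint : Integrable X P)
    (hB : B.IsSymm) (hdens : P.map X = μ.withDensity fun x => φ (B x x)) (hBw : B w = v)
    (hw : v w ≠ 0) {r : Module.Dual ℝ E} (hrw : r w = 0) :
    P[(fun ω => r (X ω)) | MeasurableSpace.comap (fun ω => v (X ω)) inferInstance] =ᵐ[P] 0 := by
  have hmeas (l : Module.Dual ℝ E) : Measurable l := l.continuous_of_finiteDimensional.measurable
  have hrT (x : E) : r (axialSymmetry v w x) = -r x := by
    rw [apply_axialSymmetry, hrw]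
    ring
  have hXT : IdentDistrib X (axialSymmetry v w ∘ X) P P :=
    identDistrib_comp_of_measurePreserving_map hX.aemeasurable <|
      hdens ▸ measurePreserving_axialSymmetry_withDensity μ hB hBw hw φ
  have hvr : IdentDistrib (fun ω => (v (X ω), r (X ω))) (fun ω => (v (X ω), -r (X ω))) P P := by
    simpa only [Function.comp_def, hrT, apply_axialSymmetry_self hw] using
      hXT.comp ((hmeas v).prodMk (hmeas r))
  exact condExp_comap_ae_eq_zero_of_identDistrib_neg ((hmeas v).comp hX)
    (r.toContinuousLinearMap.integrable_comp hint) hvr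

/-- The form `B` plays the role of `Σ⁻¹`, the functionals `u` and `v` those of `⟨·, u⟩` and
`⟨·, v⟩`, and `w` that of `Σ v`. -/
theorem elliptical_conditional_expectation_linear_general (hX : Measurable X)
    (hint : Integrable X P) (hB : B.IsSymm)
    (hdens : P.map X = μ.withDensity fun x => φ (B x x)) (u : Module.Dual ℝ E) (hBw : B w = v)
    (hw : v w ≠ 0) :
    P[(fun ω => u (X ω)) | MeasurableSpace.comap (fun ω => v (X ω)) inferInstance]
      =ᵐ[P] fun ω => u w / v w * v (X ω) := by
  let c := u w / v w
  have hvX : Measurable fun ω => v (X ω) :=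
    v.continuous_of_finiteDimensional.measurable.comp hX
  have hlint (l : Module.Dual ℝ E) : Integrable (fun ω => l (X ω)) P :=
    l.toContinuousLinearMap.integrable_comp hint
  have hcv := condExp_of_stronglyMeasurable hvX.comap_le
    ((comap_measurable fun ω => v (X ω)).const_mul c).stronglyMeasurable ((hlint v).const_mul c)
  have hresidual := condExp_dual_ae_eq_zero_of_apply_eq_zero hX hint hB hdens hBw hw
    (r := u - c • v) (by simp [c, div_mul_cancel₀ _ hw])
  have hsub := condExp_sub (hlint u) ((hlint v).const_mul c)
    (MeasurableSpace.comap (fun ω => v (X ω)) inferInstance)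
  rw [hcv] at hsub
  filter_upwards [hsub.symm.trans hresidual] with ω hω
  exact sub_eq_zero.1 hω

end Probability

lemma isSymm_innerₗ_compl₂ {E : Type*} [NormedAddCommGroup E] [InnerProductSpace ℝ E]
    {Q : E →ₗ[ℝ] E} (hQ : Q.IsSymmetric) :
    LinearMap.BilinForm.IsSymm ((innerₗ E).compl₂ Q) :=
  ⟨fun x y => (hQ x y).symm.trans (real_inner_comm _ _)⟩

lemma innerₗ_compl₂_eq_innerₗ {E : Type*} [NormedAddCommGroup E] [InnerProductSpace ℝ E]
    {Q : E →ₗ[ℝ] E} (hQ : Q.IsSymmetric) (x : E) :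
    (innerₗ E).compl₂ Q x = innerₗ E (Q x) :=
  LinearMap.ext fun y => (hQ x y).symm

lemma toEuclideanLin_inv_apply_toEuclideanLin {𝕜 n : Type*} [RCLike 𝕜] [Fintype n] [DecidableEq n]
    {S : Matrix n n 𝕜} (hS : IsUnit S) (x : EuclideanSpace 𝕜 n) :
    Matrix.toEuclideanLin S⁻¹ (Matrix.toEuclideanLin S x) = x := by
  have hdet : IsUnit S.det := (Matrix.isUnit_iff_isUnit_det S).1 hS
  rw [← LinearMap.comp_apply, ← Matrix.toLpLin_mul_same, Matrix.nonsing_inv_mul S hdet,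
    Matrix.toLpLin_one, LinearMap.id_apply]

open scoped ComplexOrder in
lemma inner_toEuclideanLin_self_pos {𝕜 n : Type*} [RCLike 𝕜] [Fintype n] [DecidableEq n]
    {S : Matrix n n 𝕜} (hS : S.PosDef) {x : EuclideanSpace 𝕜 n} (hx : x ≠ 0) :
    0 < inner 𝕜 x (Matrix.toEuclideanLin S x) := by
  rw [EuclideanSpace.inner_eq_star_dotProduct, dotProduct_comm, Matrix.ofLp_toLpLin,
    Matrix.toLin'_apply]
  exact hS.dotProduct_mulVec_pos (by simpa using hx)

/-- for a centered elliptical random vector `X` in `ℝ^d` with positive definite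
scatter matrix `Σ` (density `x ↦ C·g(xᵀΣ⁻¹x)`), `E[‖X‖] < ∞`, and linearly independent
`u, v ∈ ℝ^d`, the conditional expectation of `⟨X, u⟩` given `σ(⟨X, v⟩)` is linear:
`E[⟨X, u⟩ | σ(⟨X, v⟩)] = (uᵀΣv / vᵀΣv)·⟨X, v⟩` a.s. -/
theorem elliptical_conditional_expectation_linear {Ω : Type*} [MeasurableSpace Ω] {d : ℕ}
    (P : Measure Ω) [IsProbabilityMeasure P]
    (X : Ω → EuclideanSpace ℝ (Fin d)) (hX : Measurable X)
    (S : Matrix (Fin d) (Fin d) ℝ) (hS : S.PosDef)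
    (g : ℝ → ℝ) (hg : ∀ s, 0 ≤ g s) (C : ℝ) (hC : 0 < C)
    (hdens : Measure.map X P = volume.withDensity
      (fun x => ENNReal.ofReal (C * g ⟪x, Matrix.toEuclideanLin S⁻¹ x⟫)))
    (hint : Integrable (fun ω => ‖X ω‖) P)
    (u v : EuclideanSpace ℝ (Fin d)) (huv : LinearIndependent ℝ ![u, v]) :
    P[(fun ω => ⟪X ω, u⟫) |
        MeasurableSpace.comap (fun ω => ⟪X ω, v⟫) inferInstance]
      =ᵐ[P] fun ω =>
        (⟪u, Matrix.toEuclideanLin S v⟫ / ⟪v, Matrix.toEuclideanLin S v⟫) * ⟪X ω, v⟫ := by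
  have hv : v ≠ 0 := huv.ne_zero 1
  have hQ := Matrix.isSymmetric_toEuclideanLin_iff.2 hS.isHermitian.inv
  have hBw := innerₗ_compl₂_eq_innerₗ hQ (Matrix.toEuclideanLin S v)
  rw [toEuclideanLin_inv_apply_toEuclideanLin hS.isUnit] at hBw
  simpa only [innerₗ_apply_apply, real_inner_comm] using
    elliptical_conditional_expectation_linear_general (φ := fun s => ENNReal.ofReal (C * g s)) hX
      ((integrable_norm_iff hX.aestronglyMeasurable).1 hint) (isSymm_innerₗ_compl₂ hQ) hdens
      (innerₗ _ u) hBw (inner_toEuclideanLin_self_pos hS hv).ne'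
end
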